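/- arXiv:1811.08386 — 2 statements merged into one kernel-verified Lean document; each statement's English description precedes it below -/
import Mathlib

section
/- Let $S_0 = k[x_0,\ldots,x_{n+e}]$, let $T_{r+1}$ be the set of all monomials in $x_0,\ldots,x_{e-1}$ of degree $r+1$, let $u$ be a monomial in $x_0,\ldots,x_{e-1}$ of degree $r > 0$, and let $I$ be the ideal generated by $T_{r+1}$ together with $u x_e, \ldots, u x_{n+e}$. Then $\deg(S_0/I) = \binom{e+r}{r} - 1$ and $\mathrm{depth}(S_0/I) = 0$. -/
set_option synthInstance.maxHeartbeats 1000000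
set_option maxHeartbeats 2000000

noncomputable section

open MvPolynomial

namespace Paper

variable (k : Type) [Field k]

/-- The degree-`d` graded component of `S₀/I` as a `k`-subspace. -/
def quotComponent {N : ℕ} (I : Ideal (MvPolynomial (Fin N) k)) (d : ℕ) :
    Submodule k (MvPolynomial (Fin N) k ⧸ I) :=
  (MvPolynomial.homogeneousSubmodule (Fin N) k d).map
    (Ideal.Quotient.mkₐ k I).toLinearMap

/-- Hilbert function of `S₀/I`. -/
def hilbFn {N : ℕ} (I : Ideal (MvPolynomial (Fin N) k)) (d : ℕ) : ℕ :=
  Module.finrank k (quotComponent k I d)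

/-- `I` is a homogeneous ideal. -/
def IdealHomog {N : ℕ} (I : Ideal (MvPolynomial (Fin N) k)) : Prop :=
  ∀ f ∈ I, ∀ d : ℕ, MvPolynomial.homogeneousComponent d f ∈ I

/-- `I` is saturated with respect to the irrelevant maximal ideal. -/
def IsSaturatedIdeal {N : ℕ} (I : Ideal (MvPolynomial (Fin N) k)) : Prop :=
  ∀ f : MvPolynomial (Fin N) k, (∀ i : Fin N, MvPolynomial.X i * f ∈ I) → f ∈ I

/-- The subscheme defined by `I` is non-degenerate: `I` contains no nonzero linear form. -/
def Nondegenerate {N : ℕ} (I : Ideal (MvPolynomial (Fin N) k)) : Prop :=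
  ∀ f ∈ I, f.IsHomogeneous 1 → f = 0

/-- `S₀/I` has Hilbert polynomial of degree `n` and multiplicity (degree) `D`. -/
def HasDeg {N : ℕ} (I : Ideal (MvPolynomial (Fin N) k)) (n D : ℕ) : Prop :=
  ∃ P : Polynomial ℚ, P.natDegree = n ∧ (D : ℚ) = P.leadingCoeff * (n.factorial : ℚ) ∧
    ∀ᶠ d : ℕ in Filter.atTop, (hilbFn k I d : ℚ) = Polynomial.eval (d : ℚ) P

/-- The irrelevant maximal ideal of `S₀/I`. -/
def irrelevantIdeal {N : ℕ} (I : Ideal (MvPolynomial (Fin N) k)) :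
    Ideal (MvPolynomial (Fin N) k ⧸ I) :=
  Ideal.span (Set.range fun i : Fin N => Ideal.Quotient.mk I (MvPolynomial.X i))

/-- `S₀/I` is Cohen-Macaulay of dimension `c`: there is a regular sequence of length `c`
in the irrelevant maximal ideal. -/
def IsCMQuot {N : ℕ} (I : Ideal (MvPolynomial (Fin N) k)) (c : ℕ) : Prop :=
  ∃ rs : List (MvPolynomial (Fin N) k ⧸ I), rs.length = c ∧
    (∀ x ∈ rs, x ∈ irrelevantIdeal k I) ∧
    RingTheory.Sequence.IsRegular (MvPolynomial (Fin N) k ⧸ I) rs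

/-- The ideal of `R = S₀/I` generated by the images of `x_e, …, x_{N-1}`. -/
def tailVarsIdeal {N : ℕ} (e : ℕ) (I : Ideal (MvPolynomial (Fin N) k)) :
    Ideal (MvPolynomial (Fin N) k ⧸ I) :=
  Ideal.span {y | ∃ i : Fin N, e ≤ (i : ℕ) ∧ y = Ideal.Quotient.mk I (MvPolynomial.X i)}

/-- The reduction number `r_S(R)` of the Noether normalization by the last variables:
the least `t > 0` with `R_{t+1} = J_{t+1}` for `J = (x_e, …, x_{N-1})R`. -/
def reductionNumber {N : ℕ} (e : ℕ) (I : Ideal (MvPolynomial (Fin N) k)) : ℕ :=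
  sInf {t | 0 < t ∧ quotComponent k I (t + 1) ≤ (tailVarsIdeal k e I).restrictScalars k}

/-- The reduction number `r(R)`: the minimum of `r_J(R₊)` over all minimal reductions `J`
of `R₊`, i.e. ideals generated by `c = dim R` linear forms. -/
def redNumAll {N : ℕ} (I : Ideal (MvPolynomial (Fin N) k)) (c : ℕ) : ℕ :=
  sInf {t | 0 < t ∧ ∃ L : Finset (MvPolynomial (Fin N) k ⧸ I),
    (L : Set (MvPolynomial (Fin N) k ⧸ I)) ⊆ quotComponent k I 1 ∧ L.card = c ∧
    quotComponent k I (t + 1) ≤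
      (Ideal.span (L : Set (MvPolynomial (Fin N) k ⧸ I))).restrictScalars k}

/-- The `k`-algebra map `S = k[x_e, …, x_{N-1}] → R = S₀/I`. -/
def nnMap {N : ℕ} (e : ℕ) (I : Ideal (MvPolynomial (Fin N) k)) :
    MvPolynomial {i : Fin N // e ≤ (i : ℕ)} k →ₐ[k] (MvPolynomial (Fin N) k ⧸ I) :=
  MvPolynomial.aeval fun i => Ideal.Quotient.mk I (MvPolynomial.X i.1)

/-- `S = k[x_e, …, x_{N-1}] → R = S₀/I` is a Noether normalization. -/
def IsNoetherNormalization {N : ℕ} (e : ℕ) (I : Ideal (MvPolynomial (Fin N) k)) : Prop :=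
  Function.Injective (nnMap k e I) ∧ (nnMap k e I).toRingHom.Finite

/-- `μ_S(R) = dim_k R/S₊R`, the minimal number of generators of `R` as an `S`-module. -/
def muS {N : ℕ} (e : ℕ) (I : Ideal (MvPolynomial (Fin N) k)) : ℕ :=
  Module.finrank k ((MvPolynomial (Fin N) k ⧸ I) ⧸ tailVarsIdeal k e I)

/-- total degree of an exponent vector -/
def tdeg {N : ℕ} (a : Fin N →₀ ℕ) : ℕ := a.sum fun _ n => n

/-- degree reverse lexicographic order with `x_0 > x_1 > ⋯ > x_{N-1}`. -/
def drlLt {N : ℕ} (a b : Fin N →₀ ℕ) : Prop :=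
  tdeg a < tdeg b ∨
    (tdeg a = tdeg b ∧ ∃ i : Fin N, b i < a i ∧ ∀ j : Fin N, i < j → a j = b j)

/-- `m` is the leading (largest, w.r.t. degrevlex) exponent of `p`. -/
def IsLeadExp {N : ℕ} (p : MvPolynomial (Fin N) k) (m : Fin N →₀ ℕ) : Prop :=
  m ∈ p.support ∧ ∀ m' ∈ p.support, m' ≠ m → drlLt m' m

/-- The initial ideal of `I` with respect to the degree reverse lexicographic order. -/
def initialIdeal {N : ℕ} (I : Ideal (MvPolynomial (Fin N) k)) :
    Ideal (MvPolynomial (Fin N) k) :=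
  Ideal.span {q | ∃ p ∈ I, ∃ m, IsLeadExp k p m ∧ q = MvPolynomial.monomial m 1}

/-- `p` is homogeneous of degree `d ∈ ℤ` (`0` if `d < 0`). -/
def HomogOfDeg {σ : Type} (p : MvPolynomial σ k) (d : ℤ) : Prop :=
  p = 0 ∨ ∃ m : ℕ, (m : ℤ) = d ∧ p.IsHomogeneous m

/-- A minimal graded free resolution of the graded module `M` (with grading `Mdeg`) over
`A = k[σ]`, recording the graded Betti numbers `β i j = dim_k Tor_i^A(M,k)_{i+j}`:
the `i`-th free module has `β i j` generators in internal degree `i + j`. -/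
structure MinGradedFreeRes (σ : Type) (M : Type) [AddCommGroup M]
    [Module (MvPolynomial σ k) M] [Module k M] (Mdeg : ℤ → Submodule k M) where
  β : ℕ → ℤ → ℕ
  rowFinite : ∀ i, (Function.support (β i)).Finite
  d : ∀ i : ℕ, (((j : ℤ) × Fin (β (i + 1) j)) →₀ MvPolynomial σ k) →ₗ[MvPolynomial σ k]
      ((j : ℤ) × Fin (β i j)) →₀ MvPolynomial σ k
  ε : (((j : ℤ) × Fin (β 0 j)) →₀ MvPolynomial σ k) →ₗ[MvPolynomial σ k] M
  graded : ∀ (i : ℕ) (j j' : ℤ) (s : Fin (β (i + 1) j)) (s' : Fin (β i j')),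
      HomogOfDeg k (d i (Finsupp.single ⟨j, s⟩ 1) ⟨j', s'⟩) (j + 1 - j')
  minimal : ∀ (i : ℕ) (j j' : ℤ) (s : Fin (β (i + 1) j)) (s' : Fin (β i j')),
      j' = j + 1 → d i (Finsupp.single ⟨j, s⟩ 1) ⟨j', s'⟩ = 0
  eps_graded : ∀ (j : ℤ) (s : Fin (β 0 j)), ε (Finsupp.single ⟨j, s⟩ 1) ∈ Mdeg j
  eps_surj : Function.Surjective ε
  exact0 : Function.Exact (d 0) ε
  exactSeq : ∀ i : ℕ, Function.Exact (d (i + 1)) (d i)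

/-- `Mdeg` is a grading of the `k[σ]`-module `M`. -/
def IsGrading (σ : Type) (M : Type) [AddCommGroup M]
    [Module (MvPolynomial σ k) M] [Module k M] (Mdeg : ℤ → Submodule k M) : Prop :=
  (⨆ d, Mdeg d) = ⊤ ∧ iSupIndep Mdeg ∧
    ∀ (i : σ) (d : ℤ), ∀ x ∈ Mdeg d, (MvPolynomial.X i : MvPolynomial σ k) • x ∈ Mdeg (d + 1)

/-- The standard grading on `S₀/I` (indexed by `ℤ`). -/
def quotDeg {N : ℕ} (I : Ideal (MvPolynomial (Fin N) k)) (d : ℤ) :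
    Submodule k (MvPolynomial (Fin N) k ⧸ I) :=
  if 0 ≤ d then quotComponent k I d.toNat else ⊥

/-- The standard grading on a homogeneous ideal `I ⊆ S₀` (indexed by `ℤ`). -/
def idealDeg {N : ℕ} (I : Ideal (MvPolynomial (Fin N) k)) (d : ℤ) :
    Submodule k ↥I :=
  if 0 ≤ d then
    Submodule.comap ((I.subtype).restrictScalars k)
      (MvPolynomial.homogeneousSubmodule (Fin N) k d.toNat)
  else ⊥

/-- `χ_m = Σ_{j=0}^m (-1)^j β_{m-j,j}`. -/
def chiOf (β : ℕ → ℤ → ℕ) (m : ℤ) : ℤ :=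
  if m < 0 then 0
  else ∑ j ∈ Finset.range (m.toNat + 1), (-1 : ℤ) ^ j * (β (m.toNat - j) (j : ℤ) : ℤ)

/-- projective dimension read off from a minimal resolution's Betti table -/
def pdOf (β : ℕ → ℤ → ℕ) : ℕ∞ :=
  ⨆ i : {i : ℕ // ∃ j, β i j ≠ 0}, ((i : ℕ) : ℕ∞)

/-- index type of the variables `x_t, …, x_{N-1}` -/
def tailIdx (N t : ℕ) := {i : Fin N // t ≤ (i : ℕ)}


/-- The `S = k[x_e,…,x_{N-1}]`-module structure on `R = S₀/I` via `nnMap`. -/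
def nnModule {N : ℕ} (e : ℕ) (I : Ideal (MvPolynomial (Fin N) k)) :
    Module (MvPolynomial {i : Fin N // e ≤ (i : ℕ)} k) (MvPolynomial (Fin N) k ⧸ I) :=
  Module.compHom _ (nnMap k e I).toRingHom

/-- The underlying set of the `S`-submodule of `R = S₀/I` spanned by `s`. -/
def nnSpan {N : ℕ} (e : ℕ) (I : Ideal (MvPolynomial (Fin N) k))
    (s : Set (MvPolynomial (Fin N) k ⧸ I)) : Set (MvPolynomial (Fin N) k ⧸ I) :=
  letI := nnModule k e I
  (Submodule.span (MvPolynomial {i : Fin N // e ≤ (i : ℕ)} k) s : Set _)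

/-- The truncated ideal `(I)_{≥ r+1}`, generated by the homogeneous elements of `I`
of degree at least `r + 1`. -/
def truncIdeal {N : ℕ} (I : Ideal (MvPolynomial (Fin N) k)) (r : ℕ) :
    Ideal (MvPolynomial (Fin N) k) :=
  Ideal.span {f | f ∈ I ∧ ∃ d : ℕ, r + 1 ≤ d ∧ f.IsHomogeneous d}

end Paper

end

/-!
Split an exponent `m` into its part `a` in the first `e` variables and its part in the remaining
`n + 1` variables. If `m` has degree greater than `r`, the second part is nonzero as soon as
`a` has degree at most `r`, so `x ^ m ∉ I` exactly when `deg a ≤ r` and `x ^ a ≠ u`: in large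
degrees `I` agrees with `(T_{r+1}, u)`. The standard monomials of large degree therefore form one
shifted copy of the monomials in `n + 1` variables for each of the `(e + r).choose r - 1`
admissible `a`, and each copy contributes `1` to the multiplicity. On the other hand `u ∉ I`,
whereas `I` contains the product of `u` with every variable, so the image of `u` is a nonzero
socle element.
-/

namespace AlmostMaximalDegree

open Finset Finsupp MvPolynomial

section MonomialIdeal

variable {σ R : Type*}

/-- The ideal of the polynomials all of whose monomials have exponents in the upper set `U`. As the
exponents of the monomials in a monomial ideal form an upper set, every monomial ideal is of this
form. -/
noncomputable abbrev monomialIdeal (R : Type*) [CommSemiring R] (U : UpperSet (σ →₀ ℕ)) :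
    Ideal (MvPolynomial σ R) :=
  restrictSupportIdeal R (U : Set (σ →₀ ℕ)) U.upper

theorem span_monomial_eq_monomialIdeal [CommSemiring R] (M : Set (σ →₀ ℕ)) :
    Ideal.span ((monomial · (1 : R)) '' M) = monomialIdeal R (upperClosure M) :=
  Ideal.ext fun _ => mem_ideal_span_monomial_image

variable [CommRing R] [Nontrivial R] {U : UpperSet (σ →₀ ℕ)} {m : σ →₀ ℕ}

theorem mk_monomial_one_eq_zero_iff :
    Ideal.Quotient.mk (monomialIdeal R U) (monomial m 1) = 0 ↔ m ∈ U :=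
  Ideal.Quotient.eq_zero_iff_mem.trans <|
    (monomial_mem_restrictSupport R).trans (or_iff_left one_ne_zero)

theorem exists_ne_zero_forall_X_mul_eq_zero (hm : m ∉ U) (hm_add : ∀ i, m + single i 1 ∈ U) :
    ∃ z : MvPolynomial σ R ⧸ monomialIdeal R U, z ≠ 0 ∧
      ∀ i, Ideal.Quotient.mk (monomialIdeal R U) (X i) * z = 0 := by
  refine ⟨Ideal.Quotient.mk _ (monomial m 1), mk_monomial_one_eq_zero_iff.not.mpr hm, fun i => ?_⟩
  rw [← map_mul, mul_comm, X, monomial_mul, one_mul]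
  exact mk_monomial_one_eq_zero_iff.mpr (hm_add i)

end MonomialIdeal

section HilbertFunction

theorem finrank_map_of_disjoint_ker {K V W : Type*} [Ring K] [AddCommGroup V] [Module K V]
    [AddCommGroup W] [Module K W] {f : V →ₗ[K] W} {p : Submodule K V}
    (h : Disjoint p (LinearMap.ker f)) : Module.finrank K (p.map f) = Module.finrank K p := by
  rw [← LinearMap.range_domRestrict]
  exact LinearMap.finrank_range_of_inj (LinearMap.injective_domRestrict_iff.mpr h)

theorem finrank_restrictSupport {σ R : Type*} [CommRing R] [Nontrivial R] (s : Finset (σ →₀ ℕ)) :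
    Module.finrank R (restrictSupport R (s : Set (σ →₀ ℕ))) = #s := by
  rw [Module.finrank_eq_nat_card_basis (basisRestrictSupport R _)]
  simp

variable (k : Type) [Field k] {N : ℕ} (U : UpperSet (Fin N →₀ ℕ)) (d : ℕ)

theorem quotComponent_monomialIdeal :
    Paper.quotComponent k (monomialIdeal k U) d =
      (restrictSupport k ({m | m.degree = d} \ U)).map
        (Ideal.Quotient.mkₐ k (monomialIdeal k U)).toLinearMap := by
  have hhom : homogeneousSubmodule (Fin N) k d = restrictSupport k {m | m.degree = d} :=
    homogeneousSubmodule_eq_finsupp_supported (Fin N) k d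
  rw [Paper.quotComponent, hhom]
  refine le_antisymm ?_ (Submodule.map_mono (restrictSupport_mono k Set.sdiff_subset))
  rw [restrictSupport_eq_span, Submodule.map_span_le]
  rintro _ ⟨m, hm, rfl⟩
  by_cases hmU : m ∈ U
  · have hzero : Ideal.Quotient.mk (monomialIdeal k U) (monomial m 1) = 0 :=
      mk_monomial_one_eq_zero_iff.mpr hmU
    exact hzero ▸ Submodule.zero_mem _
  · exact Submodule.mem_map_of_mem ((monomial_mem_restrictSupport k).mpr (.inl ⟨hm, hmU⟩))

theorem disjoint_restrictSupport {σ R : Type*} [CommSemiring R] {s t : Set (σ →₀ ℕ)}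
    (h : Disjoint s t) : Disjoint (restrictSupport R s) (restrictSupport R t) := by
  refine Submodule.disjoint_def.mpr fun p hs ht => ?_
  simpa using h hs ht

theorem hilbFn_monomialIdeal [DecidablePred (· ∈ U)] :
    Paper.hilbFn k (monomialIdeal k U) d =
      #{m ∈ finsuppAntidiag univ d | m ∉ U} := by
  have hset : {m : Fin N →₀ ℕ | m.degree = d} \ U =
      ({m ∈ finsuppAntidiag univ d | m ∉ U} : Finset (Fin N →₀ ℕ)) := by
    ext m
    simp [degree_eq_sum]
  have hker : LinearMap.ker (Ideal.Quotient.mkₐ k (monomialIdeal k U)).toLinearMap =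
      restrictSupport k U := by
    ext p
    exact Ideal.Quotient.eq_zero_iff_mem
  rw [Paper.hilbFn, quotComponent_monomialIdeal, finrank_map_of_disjoint_ker, hset,
    finrank_restrictSupport]
  rw [hker]
  exact disjoint_restrictSupport Set.disjoint_sdiff_left

end HilbertFunction

section Counting

variable {σ : Type*} [DecidableEq σ] {s : Finset σ}

theorem mem_finsuppAntidiag_iff_degree {m : σ →₀ ℕ} {d : ℕ} :
    m ∈ finsuppAntidiag s d ↔ m.degree = d ∧ m.support ⊆ s := by
  rw [mem_finsuppAntidiag, and_congr_left_iff]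
  intro h
  rw [degree_apply, Finset.sum_subset h fun i _ hi => notMem_support_iff.mp hi]

variable (s) in
/-- The exponents of the monomials of degree at most `r` in the variables indexed by `s`. -/
def exponentsDegreeLE (r : ℕ) : Finset (σ →₀ ℕ) :=
  (range (r + 1)).biUnion (finsuppAntidiag s)

theorem mem_exponentsDegreeLE {r : ℕ} {m : σ →₀ ℕ} :
    m ∈ exponentsDegreeLE s r ↔ m.degree ≤ r ∧ m.support ⊆ s := by
  simp only [exponentsDegreeLE, mem_biUnion, mem_range, mem_finsuppAntidiag_iff_degree,
    Nat.lt_succ_iff]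
  exact ⟨fun ⟨_, hj, hm, hs⟩ => ⟨hm.trans_le hj, hs⟩, fun ⟨hm, hs⟩ => ⟨_, hm, rfl, hs⟩⟩

theorem card_exponentsDegreeLE (r : ℕ) : #(exponentsDegreeLE s r) = (#s + r).choose r := by
  have hdisj : Set.PairwiseDisjoint (range (r + 1) : Set ℕ) (finsuppAntidiag s) := by
    intro i _ j _ hij
    refine disjoint_left.mpr fun m hi hj => hij ?_
    rw [mem_finsuppAntidiag_iff_degree] at hi hj
    exact hi.1.symm.trans hj.1
  simp_rw [exponentsDegreeLE, card_biUnion hdisj, card_finsuppAntidiag_nat_eq_multichoose,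
    Nat.sum_range_multichoose, add_comm r, Nat.choose_symm_add]

theorem filter_mem_add_eq_left {a b : σ →₀ ℕ} (ha : a.support ⊆ s)
    (hb : Disjoint b.support s) : (a + b).filter (· ∈ s) = a := by
  rw [filter_add, (filter_eq_self_iff _ _).mpr fun i hi => ha (mem_support_iff.mpr hi),
    (filter_eq_zero_iff _ _).mpr fun i hi =>
      notMem_support_iff.mp (disjoint_right.mp hb hi), add_zero]

variable [Fintype σ]

theorem card_finsuppAntidiag_filter_eq {a : σ →₀ ℕ} (ha : a.support ⊆ s) {d : ℕ}
    (had : a.degree ≤ d) :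
    #{m ∈ finsuppAntidiag univ d | m.filter (· ∈ s) = a} =
      (#sᶜ).multichoose (d - a.degree) := by
  have hfiber : {m ∈ finsuppAntidiag (univ : Finset σ) d | m.filter (· ∈ s) = a} =
      (finsuppAntidiag sᶜ (d - a.degree)).map (addLeftEmbedding a) := by
    ext m
    simp only [mem_filter, mem_map, addLeftEmbedding_apply, mem_finsuppAntidiag_iff_degree,
      subset_univ, and_true, subset_compl_iff_disjoint_right]
    constructor
    · rintro ⟨rfl, rfl⟩
      have hsplit := filter_add_filter_not m (· ∈ s)
      refine ⟨m.filter (· ∉ s), ⟨?_, ?_⟩, hsplit⟩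
      · rw [eq_tsub_iff_add_eq_of_le had, add_comm, ← map_add, hsplit]
      · simp [Finset.disjoint_left]
    · rintro ⟨b, ⟨hbd, hbs⟩, rfl⟩
      refine ⟨?_, filter_mem_add_eq_left ha hbs⟩
      rw [map_add, hbd, Nat.add_sub_cancel' had]
  rw [hfiber, card_map, card_finsuppAntidiag_nat_eq_multichoose]

theorem card_finsuppAntidiag_filter_mem {B : Finset (σ →₀ ℕ)} (hB : ∀ a ∈ B, a.support ⊆ s) {d : ℕ}
    (hd : ∀ a ∈ B, a.degree ≤ d) :
    #{m ∈ finsuppAntidiag univ d | m.filter (· ∈ s) ∈ B} =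
      ∑ a ∈ B, (#sᶜ).multichoose (d - a.degree) := by
  have hmaps : ∀ m ∈ ({m ∈ finsuppAntidiag univ d | m.filter (· ∈ s) ∈ B} : Finset (σ →₀ ℕ)),
      m.filter (· ∈ s) ∈ B := fun m hm => (mem_filter.mp hm).2
  rw [card_eq_sum_card_fiberwise hmaps]
  refine sum_congr rfl fun a ha => ?_
  rw [← card_finsuppAntidiag_filter_eq (hB a ha) (hd a ha), filter_filter]
  congr 1
  refine filter_congr fun m _ => and_iff_right_of_imp ?_
  rintro rfl
  exact ha

end Counting

section HilbertPolynomial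

open Polynomial (preHilbertPoly)

variable (F : Type*) [Field F] [CharZero F] {ι : Type*} (B : Finset ι) (n : ℕ) (f : ι → ℕ)

theorem coeff_sum_preHilbertPoly :
    (∑ a ∈ B, preHilbertPoly F n (f a)).coeff n = #B * (n.factorial : F)⁻¹ := by
  simp [Polynomial.finsetSum_coeff, Polynomial.coeff_preHilbertPoly_self]

variable {B} in
theorem natDegree_sum_preHilbertPoly (hB : B.Nonempty) :
    (∑ a ∈ B, preHilbertPoly F n (f a)).natDegree = n := by
  refine Polynomial.natDegree_eq_of_le_of_coeff_ne_zero ?_ ?_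
  · exact Polynomial.natDegree_sum_le_of_forall_le _ _ fun a _ =>
      (Polynomial.natDegree_preHilbertPoly F n (f a)).le
  · rw [coeff_sum_preHilbertPoly]
    have := hB.card_ne_zero
    have := n.factorial_ne_zero
    positivity

variable {B} in
theorem eval_sum_preHilbertPoly {d : ℕ} (hd : ∀ a ∈ B, f a ≤ d) :
    (∑ a ∈ B, preHilbertPoly F n (f a)).eval (d : F) =
      (∑ a ∈ B, (n + 1).multichoose (d - f a) : ℕ) := by
  rw [Polynomial.eval_finsetSum, Nat.cast_sum]
  refine sum_congr rfl fun a ha => ?_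
  rw [Polynomial.preHilbertPoly_eq_choose_sub_add F n (hd a ha), Nat.multichoose_eq,
    Nat.add_right_comm, Nat.add_sub_cancel, add_comm, Nat.choose_symm_add]

end HilbertPolynomial

/- The hypothesis `hU` says that the standard monomials of large degree form `#B` shifted copies of
the monomials in the `n + 1` variables outside `s`. -/
theorem hasDeg_monomialIdeal (k : Type) [Field k] {N n : ℕ} {U : UpperSet (Fin N →₀ ℕ)}
    {s : Finset (Fin N)} (hs : #sᶜ = n + 1) {B : Finset (Fin N →₀ ℕ)} (hB : B.Nonempty)
    (hBs : ∀ a ∈ B, a.support ⊆ s)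
    (hU : ∀ᶠ d in Filter.atTop, ∀ m : Fin N →₀ ℕ, m.degree = d →
      (m ∉ U ↔ m.filter (· ∈ s) ∈ B)) :
    Paper.HasDeg k (monomialIdeal k U) n #B := by
  classical
  have hdeg := natDegree_sum_preHilbertPoly ℚ n degree hB
  refine ⟨∑ a ∈ B, Polynomial.preHilbertPoly ℚ n a.degree, hdeg, ?_, ?_⟩
  · rw [Polynomial.leadingCoeff, hdeg, coeff_sum_preHilbertPoly,
      inv_mul_cancel_right₀ (Nat.cast_ne_zero.mpr n.factorial_ne_zero)]
  · filter_upwards [hU, Filter.eventually_ge_atTop (B.sup degree)] with d hUd hd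
    have hBd : ∀ a ∈ B, a.degree ≤ d := fun a ha => (le_sup ha).trans hd
    have hstd : {m ∈ finsuppAntidiag (univ : Finset (Fin N)) d | m ∉ U} =
        {m ∈ finsuppAntidiag (univ : Finset (Fin N)) d | m.filter (· ∈ s) ∈ B} :=
      filter_congr fun m hm => hUd m (mem_finsuppAntidiag_iff_degree.mp hm).1
    rw [hilbFn_monomialIdeal, hstd, card_finsuppAntidiag_filter_mem hBs hBd, hs,
      eval_sum_preHilbertPoly ℚ n degree hBd]

section Divisibility

variable {σ : Type*} {u m : σ →₀ ℕ}

theorem le_iff_eq_of_degree_le (h : m.degree ≤ u.degree) : u ≤ m ↔ m = u := by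
  refine ⟨fun hle => ?_, fun heq => heq.ge⟩
  obtain ⟨c, rfl⟩ := le_iff_exists_add.mp hle
  rw [map_add] at h
  have hc : c.degree = 0 := by omega
  rw [(degree_eq_zero_iff c).mp hc, add_zero]

theorem filter_le_self (p : σ → Prop) [DecidablePred p] : m.filter p ≤ m := by
  intro i
  rw [filter_apply]
  split_ifs <;> simp

variable [DecidableEq σ] {s : Finset σ}

theorem support_filter_mem_subset : (m.filter (· ∈ s)).support ⊆ s :=
  fun _ hi => (mem_filter.mp hi).2

theorem le_filter_mem_iff (hu : u.support ⊆ s) : u ≤ m.filter (· ∈ s) ↔ u ≤ m := by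
  refine ⟨fun h => h.trans (filter_le_self _), fun h i => ?_⟩
  by_cases hi : i ∈ s
  · simpa [hi] using h i
  · simp [notMem_support_iff.mp fun hui => hi (hu hui)]

theorem exists_degree_eq_le_iff {d : ℕ} :
    (∃ c : σ →₀ ℕ, (c.degree = d ∧ c.support ⊆ s) ∧ c ≤ m) ↔ d ≤ (m.filter (· ∈ s)).degree := by
  constructor
  · rintro ⟨c, ⟨rfl, hcs⟩, hcm⟩
    exact degree_mono ((le_filter_mem_iff hcs).mpr hcm)
  · intro hd
    obtain ⟨c, hc, hcd⟩ := exists_le_degree_eq _ d hd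
    exact ⟨c, ⟨hcd, (support_mono hc).trans support_filter_mem_subset⟩, hc.trans (filter_le_self _)⟩

theorem exists_add_single_le_iff (hu : u.support ⊆ s) :
    (∃ i ∉ s, u + single i 1 ≤ m) ↔ u ≤ m.filter (· ∈ s) ∧ m.filter (· ∈ s) ≠ m := by
  have hu_zero : ∀ i ∉ s, u i = 0 := fun i hi => notMem_support_iff.mp fun h => hi (hu h)
  rw [le_filter_mem_iff hu, Ne, filter_eq_self_iff]
  push Not
  constructor
  · rintro ⟨i, hi, hle⟩
    refine ⟨le_self_add.trans hle, i, ?_, hi⟩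
    have := hle i
    simp only [Finsupp.add_apply, single_eq_same] at this
    omega
  · rintro ⟨hum, i, hmi, hi⟩
    refine ⟨i, hi, fun j => ?_⟩
    obtain rfl | hij := eq_or_ne j i
    · simp [hu_zero j hi, Nat.one_le_iff_ne_zero, hmi]
    · simpa [single_eq_of_ne hij] using hum j

end Divisibility

section Example

variable {σ : Type*} (s : Finset σ) (u : σ →₀ ℕ) {m : σ →₀ ℕ}

/-- The exponents of the generators of `I`: those of the monomials of degree `deg u + 1` in the
variables indexed by `s`, and those of the products of `x ^ u` with the remaining variables. -/
def generatorExponents : Set (σ →₀ ℕ) :=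
  {m | m.degree = u.degree + 1 ∧ m.support ⊆ s} ∪ {m | ∃ i ∉ s, m = u + single i 1}

theorem self_notMem_upperClosure_generatorExponents :
    u ∉ upperClosure (generatorExponents s u) := by
  rintro ⟨c, hc, hcu⟩
  have hc_degree : c.degree = u.degree + 1 := by
    obtain ⟨hdeg, -⟩ | ⟨i, -, rfl⟩ := hc
    · exact hdeg
    · rw [map_add, degree_single]
  have := degree_mono hcu
  omega

variable {s u}

theorem add_single_mem_upperClosure_generatorExponents (hu : u.support ⊆ s) (i : σ) :
    u + single i 1 ∈ upperClosure (generatorExponents s u) := by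
  classical
  refine subset_upperClosure ?_
  by_cases hi : i ∈ s
  · refine .inl ⟨by rw [map_add, degree_single], support_add.trans (union_subset hu ?_)⟩
    exact support_single_subset.trans (singleton_subset_iff.mpr hi)
  · exact .inr ⟨i, hi, rfl⟩

theorem span_generators_eq_monomialIdeal (R : Type*) [CommSemiring R] :
    Ideal.span
        ({q | ∃ m : σ →₀ ℕ, m.degree = u.degree + 1 ∧ m.support ⊆ s ∧ q = monomial m (1 : R)} ∪
          {q | ∃ i ∉ s, q = monomial u (1 : R) * X i}) =
      monomialIdeal R (upperClosure (generatorExponents s u)) := by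
  rw [← span_monomial_eq_monomialIdeal, generatorExponents, Set.image_union]
  congr 2 <;> ext q
  · simp [and_assoc, eq_comm]
  · simp [X, monomial_mul, eq_comm]

variable [DecidableEq σ]

theorem mem_upperClosure_generatorExponents (hu : u.support ⊆ s) :
    m ∈ upperClosure (generatorExponents s u) ↔
      u.degree < (m.filter (· ∈ s)).degree ∨
        u ≤ m.filter (· ∈ s) ∧ m.filter (· ∈ s) ≠ m := by
  rw [← exists_add_single_le_iff hu, ← Nat.succ_le_iff, ← exists_degree_eq_le_iff]
  simp only [generatorExponents, upperClosure_union]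
  simp [mem_upperClosure]

theorem notMem_upperClosure_generatorExponents (hu : u.support ⊆ s) (hm : u.degree < m.degree) :
    m ∉ upperClosure (generatorExponents s u) ↔
      m.filter (· ∈ s) ∈ (exponentsDegreeLE s u.degree).erase u := by
  have hne (h : (m.filter (· ∈ s)).degree ≤ u.degree) : m.filter (· ∈ s) ≠ m := by
    intro heq
    rw [heq] at h
    omega
  rw [mem_upperClosure_generatorExponents hu, mem_erase, mem_exponentsDegreeLE]
  grind [support_filter_mem_subset, le_iff_eq_of_degree_le]

theorem hasDeg_monomialIdeal_generatorExponents (k : Type) [Field k] {N n : ℕ} {s : Finset (Fin N)}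
    {u : Fin N →₀ ℕ} (hs : #sᶜ = n + 1) (hu : u.support ⊆ s) (hu_ne : u ≠ 0) :
    Paper.HasDeg k (monomialIdeal k (upperClosure (generatorExponents s u))) n
      ((#s + u.degree).choose u.degree - 1) := by
  have hmem : u ∈ exponentsDegreeLE s u.degree := mem_exponentsDegreeLE.mpr ⟨le_rfl, hu⟩
  have hzero : 0 ∈ (exponentsDegreeLE s u.degree).erase u :=
    mem_erase.mpr ⟨hu_ne.symm, mem_exponentsDegreeLE.mpr (by simp)⟩
  rw [← card_exponentsDegreeLE, ← card_erase_of_mem hmem]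
  refine hasDeg_monomialIdeal k hs ⟨0, hzero⟩
    (fun a ha => (mem_exponentsDegreeLE.mp (mem_of_mem_erase ha)).2) ?_
  filter_upwards [Filter.eventually_gt_atTop u.degree] with d hd m hm
  exact notMem_upperClosure_generatorExponents hu (hm ▸ hd)

theorem tdeg_eq_degree {N : ℕ} (m : Fin N →₀ ℕ) : Paper.tdeg m = m.degree := rfl

end Example

end AlmostMaximalDegree

/-- Example 5.9: for `I = (T_{r+1}, u·x_e, …, u·x_{n+e})` where `T_{r+1}` consists of all
monomials of degree `r+1` in `x_0,…,x_{e-1}` and `u` is a monomial of degree `r > 0` in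
`x_0,…,x_{e-1}`: `deg(S₀/I) = C(e+r, r) - 1` and `depth(S₀/I) = 0` (there is a nonzero
element of `S₀/I` annihilated by the irrelevant maximal ideal). -/
theorem stmt17 (k : Type) [Field k] (n e r : ℕ) (he : 1 ≤ e) (hr : 0 < r)
    (mu : Fin (n + e + 1) →₀ ℕ) (hmu : Paper.tdeg mu = r)
    (hmusupp : ∀ i : Fin (n + e + 1), e ≤ (i : ℕ) → mu i = 0)
    (I : Ideal (MvPolynomial (Fin (n + e + 1)) k))
    (hIdef : I = Ideal.span
      ({q | ∃ m : Fin (n + e + 1) →₀ ℕ, Paper.tdeg m = r + 1 ∧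
          (∀ i : Fin (n + e + 1), e ≤ (i : ℕ) → m i = 0) ∧
          q = MvPolynomial.monomial m (1 : k)} ∪
        {q | ∃ i : Fin (n + e + 1), e ≤ (i : ℕ) ∧
          q = MvPolynomial.monomial mu (1 : k) * MvPolynomial.X i})) :
    Paper.HasDeg k I n ((e + r).choose r - 1) ∧
      ∃ z : MvPolynomial (Fin (n + e + 1)) k ⧸ I, z ≠ 0 ∧
        ∀ i : Fin (n + e + 1), Ideal.Quotient.mk I (MvPolynomial.X i) * z = 0 := by
  obtain rfl : mu.degree = r := hmu
  let s : Finset (Fin (n + e + 1)) := {i | (i : ℕ) < e}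
  have hmem (i : Fin (n + e + 1)) : i ∉ s ↔ e ≤ (i : ℕ) := by simp [s]
  have hsupp (m : Fin (n + e + 1) →₀ ℕ) :
      m.support ⊆ s ↔ ∀ i : Fin (n + e + 1), e ≤ (i : ℕ) → m i = 0 := by
    simp [s, Finset.subset_iff, not_imp_comm]
  have hs_card : s.card = e := by simp [s, Fin.card_filter_val_lt]; omega
  have hsc_card : sᶜ.card = n + 1 := by rw [Finset.card_compl, hs_card, Fintype.card_fin]; omega
  have hmus : mu.support ⊆ s := (hsupp mu).mpr hmusupp
  have hmu_ne : mu ≠ 0 := ne_of_apply_ne Finsupp.degree (by simpa using hr.ne')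
  obtain rfl : I = AlmostMaximalDegree.monomialIdeal k
      (upperClosure (AlmostMaximalDegree.generatorExponents s mu)) := by
    simp only [hIdef, ← AlmostMaximalDegree.span_generators_eq_monomialIdeal, hsupp, hmem,
      AlmostMaximalDegree.tdeg_eq_degree]
  constructor
  · simpa only [hs_card] using
      AlmostMaximalDegree.hasDeg_monomialIdeal_generatorExponents k hsc_card hmus hmu_ne
  · exact AlmostMaximalDegree.exists_ne_zero_forall_X_mul_eq_zero
      (AlmostMaximalDegree.self_notMem_upperClosure_generatorExponents s mu)
      (AlmostMaximalDegree.add_single_mem_upperClosure_generatorExponents hmus)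
end

section
/- Let $X \subseteq \mathbb{P}^{n+e}$ be a non-degenerate closed subscheme with homogeneous coordinate ring $R$, reduction number $r$, and Noether normalization $S = k[x_e,\ldots,x_{n+e}] \hookrightarrow R$ with $r_S(R) = r$. Then $\deg(X) = \mu_S(R) = \binom{e+r}{r} - 1$ if and only if $X$ is arithmetically Cohen-Macaulay, $\dim_k (I_X)_r = 1$, and the truncated ideal $(I_X)_{\ge r+1}$ has a linear minimal free resolution. -/
set_option synthInstance.maxHeartbeats 1000000
set_option maxHeartbeats 2000000

/-!
Write `F` for the Hilbert function of `S₀/(I + (x_e, …, x_{n+e}))`, so that `μ_S(R) = ∑ F d`,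
and let `σ` be the operator of partial sums.

If `deg X = μ_S(R)` then `R` is free over `S`: a minimal generating set of size `μ` of a module of
rank `μ` has no relations. Hence the tail variables form a regular sequence on `R` in every order,
and `R` is Cohen-Macaulay. Conversely, if `R` is Cohen-Macaulay, Rees' theorem and prime avoidance
over the infinite field `k` produce a regular sequence of full length in the span of the tail
variables, which therefore generates the same ideal. In both cases the Hilbert function of `R` is
`σ^{n+1} F`, which determines the degree.

Here `F` vanishes in degrees `> r` and is bounded by the Hilbert function of `k[x_0, …, x_{e-1}]`,
and once it drops below that bound it stays below. So `μ_S(R) = C(e+r, r) - 1` says that `F` first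
drops in degree `r`, and by one. This property is preserved by `σ^{n+1}`, where it becomes
`dim (I_X)_r = 1`.

For the resolution of the truncation: the tail variables are regular on `R`, and modulo them `R`
vanishes in degrees `> r`. Hence in degrees `> r` every variable is regular modulo the preceding
ones; this passes to `I` and to its truncation, and confines all their Betti numbers to one strand.
-/

noncomputable section

open MvPolynomial
open scoped Pointwise

namespace Paper

section FilterRegular

variable {A σ M H : Type*} [CommRing A] [AddCommGroup M] [Module A M] [AddCommGroup H]
  [Module A H] {x : σ → A} {p : ℤ → M →+ M} {p' : ℤ → H →+ H} {q : ℤ}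

/-- Projections `p d` of an `A`-module onto its graded pieces, for a grading in which the `x i` have
degree one. Only the properties entering regularity bounds are recorded. -/
structure IsDegreeProj (x : σ → A) (p : ℤ → M →+ M) : Prop where
  idem : ∀ d m, p d (p d m) = p d m
  smul : ∀ i d m, p (d + 1) (x i • m) = x i • p d m

/-- Graded submodules with respect to given degree projections. -/
def IsGradedSubmodule (p : ℤ → M →+ M) (W : Submodule A M) : Prop :=
  ∀ d, ∀ m ∈ W, p d m ∈ W

/-- The Bayer–Stillman criterion for the regularity of `W / Q` to be at most `q`: successive
multiplication by the `x i` is injective in degrees above `q`, and the last quotient vanishes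
there. Here `Q` need not be contained in `W`; it stands for `Q ∩ W`. -/
def IsRegularAbove (x : σ → A) (p : ℤ → M →+ M) (q : ℤ) (W : Submodule A M) :
    List σ → Submodule A M → Prop
  | [], Q => ∀ d > q, ∀ m ∈ W, p d m = m → m ∈ Q
  | i :: l, Q => (∀ d > q, ∀ m ∈ W, p d m = m → x i • m ∈ Q → m ∈ Q) ∧
      IsRegularAbove x p q W l (Q ⊔ x i • W)

theorem mem_sup_smul_iff {a : A} {W Q : Submodule A M} {m : M} :
    m ∈ Q ⊔ a • W ↔ ∃ n ∈ Q, ∃ w ∈ W, n + a • w = m := by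
  simp only [Submodule.mem_sup, Submodule.mem_smul_pointwise_iff_exists]
  constructor
  · rintro ⟨n, hn, _, ⟨w, hw, rfl⟩, rfl⟩
    exact ⟨n, hn, w, hw, rfl⟩
  · rintro ⟨n, hn, w, hw, rfl⟩
    exact ⟨n, hn, _, ⟨w, hw, rfl⟩, rfl⟩

theorem IsGradedSubmodule.bot : IsGradedSubmodule p (⊥ : Submodule A M) := by
  intro d m hm
  rw [Submodule.mem_bot] at hm ⊢
  rw [hm, map_zero]

theorem IsGradedSubmodule.top : IsGradedSubmodule p (⊤ : Submodule A M) :=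
  fun _ _ _ => Submodule.mem_top

theorem IsGradedSubmodule.ker {f : M →ₗ[A] H} (hf : ∀ d m, f (p d m) = p' d (f m)) :
    IsGradedSubmodule p (LinearMap.ker f) := by
  intro d m hm
  rw [LinearMap.mem_ker] at hm ⊢
  rw [hf, hm, map_zero]

namespace IsDegreeProj

variable (hp : IsDegreeProj x p)
include hp

theorem smul' (i : σ) (d : ℤ) (m : M) : p d (x i • m) = x i • p (d - 1) m := by
  simpa using hp.smul i (d - 1) m

theorem isGradedSubmodule_sup_smul {W Q : Submodule A M} (hQ : IsGradedSubmodule p Q)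
    (hW : IsGradedSubmodule p W) (i : σ) : IsGradedSubmodule p (Q ⊔ x i • W) := by
  intro d m hm
  obtain ⟨n, hn, w, hw, rfl⟩ := mem_sup_smul_iff.1 hm
  rw [map_add, hp.smul']
  exact mem_sup_smul_iff.2 ⟨_, hQ d n hn, _, hW _ w hw, rfl⟩

theorem exists_homogeneous_of_mem_sup_smul {W Q : Submodule A M} (hQ : IsGradedSubmodule p Q)
    (hW : IsGradedSubmodule p W) {i : σ} {d : ℤ} {m : M} (hpm : p d m = m)
    (hm : m ∈ Q ⊔ x i • W) :
    ∃ n ∈ Q, p d n = n ∧ ∃ w ∈ W, p (d - 1) w = w ∧ n + x i • w = m := by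
  obtain ⟨n, hn, w, hw, h⟩ := mem_sup_smul_iff.1 hm
  refine ⟨p d n, hQ d n hn, hp.idem d n, p (d - 1) w, hW _ w hw, hp.idem _ w, ?_⟩
  rw [← hp.smul', ← map_add, h, hpm]

theorem mem_sup_smul_of_mem_ker_sup_smul {f : M →ₗ[A] H} (hf : ∀ d m, f (p d m) = p' d (f m))
    {W QW QM : Submodule A M} {QV : Submodule A H} (hW : IsGradedSubmodule p W)
    (hQM : IsGradedSubmodule p QM) (hcomap : QV.comap f = W ⊔ QM)
    (hinf : ∀ d > q + 1, ∀ w ∈ W, p d w = w → w ∈ QM → w ∈ QW) {i : σ}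
    (hreg : ∀ d > q, ∀ v ∈ LinearMap.range f, p' d v = v → x i • v ∈ QV → v ∈ QV)
    {d : ℤ} (hd : d > q + 1) {w : M} (hw : w ∈ W) (hpw : p d w = w)
    (hmem : w ∈ QM ⊔ x i • ⊤) : w ∈ QW ⊔ x i • W := by
  obtain ⟨n, hn, -, g, -, hpg, hng⟩ :=
    hp.exists_homogeneous_of_mem_sup_smul hQM .top hpw hmem
  have hfg : x i • f g ∈ QV := by
    have hxg : x i • g ∈ QV.comap f := by
      rw [hcomap, eq_sub_of_add_eq' hng]
      exact sub_mem (Submodule.mem_sup_left hw) (Submodule.mem_sup_right hn)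
    simpa using hxg
  have hg : g ∈ QV.comap f :=
    hreg (d - 1) (by linarith) (f g) ⟨g, rfl⟩ (by rw [← hf, hpg]) hfg
  rw [hcomap] at hg
  obtain ⟨u, hu, m, hm, rfl⟩ := Submodule.mem_sup.1 hg
  have hu' : p (d - 1) u ∈ W := hW _ u hu
  have hdecomp : w - x i • p (d - 1) u = n + x i • p (d - 1) m := by
    rw [← hng, ← hpg, map_add, smul_add]
    abel
  refine mem_sup_smul_iff.2 ⟨w - x i • p (d - 1) u, hinf d hd _ ?_ ?_ ?_, _, hu', by abel⟩
  · exact W.sub_mem hw (W.smul_mem _ hu')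
  · rw [map_sub, hpw, hp.smul', hp.idem]
  · rw [hdecomp]
    exact QM.add_mem hn (QM.smul_mem _ (hQM _ m hm))

end IsDegreeProj

theorem comap_sup_smul_range {f : M →ₗ[A] H} {W QM : Submodule A M} {QV : Submodule A H}
    (hcomap : QV.comap f = W ⊔ QM) (a : A) :
    (QV ⊔ a • LinearMap.range f).comap f = W ⊔ (QM ⊔ a • ⊤) := by
  rw [← sup_assoc, ← hcomap]
  ext g
  simp only [Submodule.mem_comap, mem_sup_smul_iff, Submodule.mem_top, true_and,
    LinearMap.mem_range]
  constructor
  · rintro ⟨n, hn, _, ⟨g', rfl⟩, hg⟩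
    refine ⟨g - a • g', ?_, g', sub_add_cancel _ _⟩
    rwa [map_sub, map_smul, ← hg, add_sub_cancel_right]
  · rintro ⟨n, hn, g', rfl⟩
    exact ⟨f n, hn, f g', ⟨g', rfl⟩, by rw [map_add, map_smul]⟩

namespace IsRegularAbove

/- The hypotheses say that `0 → W / QW → M / QM → range f / QV → 0` is exact in degrees above
`q + 1`; this is preserved when all three are divided by `x i`. -/
theorem of_exact (hp : IsDegreeProj x p) {f : M →ₗ[A] H} (hf : ∀ d m, f (p d m) = p' d (f m))
    {W : Submodule A M} (hW : IsGradedSubmodule p W) {l : List σ} {QW QM : Submodule A M}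
    {QV : Submodule A H} (hQM : IsGradedSubmodule p QM) (hle : QW ≤ QM)
    (hcomap : QV.comap f = W ⊔ QM)
    (hinf : ∀ d > q + 1, ∀ w ∈ W, p d w = w → w ∈ QM → w ∈ QW)
    (hM : IsRegularAbove x p (q + 1) ⊤ l QM)
    (hV : IsRegularAbove x p' q (LinearMap.range f) l QV) :
    IsRegularAbove x p (q + 1) W l QW := by
  induction l generalizing QW QM QV with
  | nil => exact fun d hd w hw hpw => hinf d hd w hw hpw (hM d hd w trivial hpw)
  | cons i l ih =>
    refine ⟨fun d hd w hw hpw h => hinf d hd w hw hpw (hM.1 d hd w trivial hpw (hle h)), ?_⟩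
    exact ih (hp.isGradedSubmodule_sup_smul hQM .top i)
      (sup_le_sup hle (Set.image_mono le_top))
      (comap_sup_smul_range hcomap (x i))
      (fun d hd w hw hpw hmem =>
        hp.mem_sup_smul_of_mem_ker_sup_smul hf hW hQM hcomap hinf hV.1 hd hw hpw hmem)
      hM.2 hV.2

theorem of_truncation (hp : IsDegreeProj x p) {W V : Submodule A M} (hWV : W ≤ V)
    (hV : IsGradedSubmodule p V) (htrunc : ∀ d ≥ q, ∀ m ∈ V, p d m = m → m ∈ W)
    {l : List σ} {QW QV : Submodule A M} (hQV : IsGradedSubmodule p QV) (hle : QW ≤ QV)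
    (hinf : ∀ d > q, ∀ w ∈ W, p d w = w → w ∈ QV → w ∈ QW)
    (h : IsRegularAbove x p q V l QV) : IsRegularAbove x p q W l QW := by
  induction l generalizing QW QV with
  | nil => exact fun d hd w hw hpw => hinf d hd w hw hpw (h d hd w (hWV hw) hpw)
  | cons i l ih =>
    refine ⟨fun d hd w hw hpw hX => hinf d hd w hw hpw (h.1 d hd w (hWV hw) hpw (hle hX)), ?_⟩
    refine ih (hp.isGradedSubmodule_sup_smul hQV hV i)
      (sup_le_sup hle (Set.image_mono hWV)) ?_ h.2
    intro d hd w hw hpw hmem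
    obtain ⟨n, hn, hpn, v, hv, hpv, rfl⟩ :=
      hp.exists_homogeneous_of_mem_sup_smul hQV hV hpw hmem
    have hvW : v ∈ W := htrunc (d - 1) (by omega) v hv hpv
    have hnW : n ∈ W := by simpa using W.sub_mem hw (W.smul_mem (x i) hvW)
    exact mem_sup_smul_iff.2 ⟨n, hinf d hd n hnW hpn hn, v, hvW, rfl⟩

theorem of_forall_mem {W : Submodule A M} {l : List σ} {Q : Submodule A M}
    (h : ∀ d > q, ∀ m ∈ W, p d m = m → m ∈ Q) : IsRegularAbove x p q W l Q := by
  induction l generalizing Q with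
  | nil => exact h
  | cons i l ih =>
    exact ⟨fun d hd m hm hpm _ => h d hd m hm hpm,
      ih fun d hd m hm hpm => Submodule.mem_sup_left (h d hd m hm hpm)⟩

theorem mem_span_smul {W : Submodule A M} {l : List σ} {Q : Submodule A M}
    (h : IsRegularAbove x p q W l Q) (hQ : Q ≤ Ideal.span (Set.range x) • W)
    {d : ℤ} (hd : d > q) {m : M} (hm : m ∈ W) (hpm : p d m = m) :
    m ∈ Ideal.span (Set.range x) • W := by
  induction l generalizing Q with
  | nil => exact hQ (h d hd m hm hpm)
  | cons i l ih =>
    refine ih h.2 (sup_le hQ ?_)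
    rintro _ ⟨w, hw, rfl⟩
    exact Submodule.smul_mem_smul (Ideal.subset_span ⟨i, rfl⟩) hw

end IsRegularAbove

/-- The elements `x i`, `i ∈ s`, form a weakly regular sequence on `M / Q` in every order. -/
def IsPermRegular (x : σ → A) (s : Set σ) (Q : Submodule A M) : Prop :=
  ∀ t ⊆ s, ∀ i ∈ s \ t,
    IsSMulRegular (M ⧸ (Q ⊔ Ideal.span (x '' t) • (⊤ : Submodule A M))) (x i)

theorem sup_span_image_insert (x : σ → A) (t : Set σ) (i : σ) (Q : Submodule A M) :
    Q ⊔ Ideal.span (x '' insert i t) • (⊤ : Submodule A M) =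
      Q ⊔ Ideal.span (x '' t) • ⊤ ⊔ x i • ⊤ := by
  rw [Set.image_insert_eq, Ideal.span_insert, Submodule.sup_smul,
    Submodule.ideal_span_singleton_smul, sup_comm (x i • ⊤), sup_assoc]

namespace IsPermRegular

variable {s : Set σ} {Q : Submodule A M}

theorem of_union {t : Set σ} (h : IsPermRegular x (s ∪ t) Q) (hst : Disjoint s t) :
    IsPermRegular x s (Q ⊔ Ideal.span (x '' t) • ⊤) := by
  intro u hu i hi
  have hiut : i ∉ t ∪ u := fun h => h.elim (hst.notMem_of_mem_left hi.1) hi.2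
  have key := h (t ∪ u) (by grind) i ⟨Or.inl hi.1, hiut⟩
  rwa [Set.image_union, Ideal.span_union, Submodule.sup_smul, ← sup_assoc] at key

theorem of_insert {i : σ} (h : IsPermRegular x (insert i s) Q) (hi : i ∉ s) :
    IsPermRegular x s (Q ⊔ x i • ⊤) := by
  rw [Set.insert_eq, Set.union_comm] at h
  simpa [Submodule.ideal_span_singleton_smul] using
    h.of_union (Set.disjoint_singleton_right.2 hi)

theorem isRegularAbove_append {l : List σ} (hl : l.Nodup) (hreg : IsPermRegular x {i | i ∈ l} Q)
    (htop : ∀ d > q, ∀ m, p d m = m → m ∈ Q ⊔ Ideal.span (x '' {i | i ∈ l}) • ⊤)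
    (l' : List σ) : IsRegularAbove x p q ⊤ (l ++ l') Q := by
  induction l generalizing Q with
  | nil => exact .of_forall_mem fun d hd m _ hpm => by simpa using htop d hd m hpm
  | cons i l ih =>
    obtain ⟨hil, hl⟩ := List.nodup_cons.1 hl
    have hset : {j | j ∈ i :: l} = insert i {j | j ∈ l} := by ext; simp
    rw [hset] at hreg htop
    refine ⟨fun d _ m _ _ hX => ?_, ih hl (hreg.of_insert hil) fun d hd m hpm => ?_⟩
    · have hi := hreg ∅ (Set.empty_subset _) i ⟨Set.mem_insert _ _, Set.notMem_empty i⟩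
      simpa using mem_of_isSMulRegular_quotient_of_smul_mem hi (Submodule.mem_sup_left hX)
    · rw [sup_right_comm, ← sup_span_image_insert]
      exact htop d hd m hpm

end IsPermRegular

end FilterRegular

section IntComponent

variable {σ R : Type*} [CommSemiring R]

/-- The degree-`d` homogeneous component of a polynomial, with `d : ℤ` so that degrees can be
shifted freely; it vanishes for `d < 0`. -/
def intComponent (σ R : Type*) [CommSemiring R] (d : ℤ) : MvPolynomial σ R →+ MvPolynomial σ R :=
  (weightedHomogeneousComponent (1 : σ → ℤ) d).toAddMonoidHom

theorem coeff_intComponent (d : ℤ) (f : MvPolynomial σ R) (m : σ →₀ ℕ) :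
    coeff m (intComponent σ R d f) = if (m.degree : ℤ) = d then coeff m f else 0 := by
  classical
  have hweight : Finsupp.weight (1 : σ → ℤ) m = m.degree := by
    simp [Finsupp.weight_apply, Finsupp.degree_apply, Finsupp.sum]
  simp [intComponent, coeff_weightedHomogeneousComponent, hweight]

theorem intComponent_natCast (d : ℕ) (f : MvPolynomial σ R) :
    intComponent σ R d f = homogeneousComponent d f := by
  ext m
  simp [coeff_intComponent, coeff_homogeneousComponent]

theorem intComponent_intComponent (d : ℤ) (f : MvPolynomial σ R) :
    intComponent σ R d (intComponent σ R d f) = intComponent σ R d f := by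
  ext m
  simp only [coeff_intComponent]
  split_ifs <;> rfl

theorem mem_idealOfVars_iff {f : MvPolynomial σ R} : f ∈ idealOfVars σ R ↔ coeff 0 f = 0 := by
  rw [← pow_one (idealOfVars σ R), mem_pow_idealOfVars_iff']
  simp [Finsupp.degree_eq_zero_iff]

theorem idealOfVars_ne_top [Nontrivial R] : idealOfVars σ R ≠ ⊤ := by
  rw [Ideal.ne_top_iff_one, mem_idealOfVars_iff, coeff_zero_one]
  exact one_ne_zero

end IntComponent

section HomogOfDeg

variable {σ k : Type} [Field k] {f g : MvPolynomial σ k} {c d : ℤ}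

theorem HomogOfDeg.degree_eq (hf : HomogOfDeg k f d) {m : σ →₀ ℕ} (hm : coeff m f ≠ 0) :
    (m.degree : ℤ) = d := by
  obtain rfl | ⟨a, rfl, hf⟩ := hf
  · simp at hm
  · rw [of_not_not fun h => hm (hf.coeff_eq_zero h)]

theorem homogOfDeg_iff_intComponent_eq : HomogOfDeg k f d ↔ intComponent σ k d f = f := by
  constructor
  · intro hf
    ext m
    rw [coeff_intComponent, ite_eq_left_iff]
    exact fun h => (of_not_not fun h' => h (hf.degree_eq (Ne.symm h'))).symm ▸ rfl
  · intro hf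
    obtain hd | hd := le_or_gt 0 d
    · lift d to ℕ using hd
      rw [intComponent_natCast] at hf
      exact Or.inr ⟨d, rfl, hf ▸ homogeneousComponent_isHomogeneous d f⟩
    · refine Or.inl ?_
      ext m
      rw [← hf, coeff_intComponent, if_neg (by omega), coeff_zero]

theorem HomogOfDeg.mem_idealOfVars (hf : HomogOfDeg k f d) (hd : d ≠ 0) :
    f ∈ idealOfVars σ k := by
  rw [mem_idealOfVars_iff]
  by_contra h0
  exact hd (by simpa using (hf.degree_eq h0).symm)

theorem HomogOfDeg.intComponent_mul (hg : HomogOfDeg k g c) (d : ℤ) (f : MvPolynomial σ k) :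
    intComponent σ k d (f * g) = intComponent σ k (d - c) f * g := by
  classical
  ext m
  have hterm : ∀ x ∈ Finset.HasAntidiagonal.antidiagonal m,
      coeff x.1 (intComponent σ k (d - c) f) * coeff x.2 g =
        if (m.degree : ℤ) = d then coeff x.1 f * coeff x.2 g else 0 := by
    intro x hx
    obtain h0 | h0 := eq_or_ne (coeff x.2 g) 0
    · simp [h0]
    · have hx2 := hg.degree_eq h0
      have hdeg : m.degree = x.1.degree + x.2.degree := by
        rw [← Finset.HasAntidiagonal.mem_antidiagonal.1 hx, map_add]
      rw [coeff_intComponent, ite_zero_mul]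
      exact if_congr (by omega) rfl rfl
  rw [coeff_intComponent, coeff_mul, coeff_mul, Finset.sum_congr rfl hterm]
  split_ifs <;> simp

theorem isDegreeProj_intComponent {τ : Type*} {x : τ → MvPolynomial σ k}
    (hx : ∀ i, HomogOfDeg k (x i) 1) : IsDegreeProj x (intComponent σ k) where
  idem := intComponent_intComponent
  smul i d f := by
    simp only [smul_eq_mul, mul_comm (x i), (hx i).intComponent_mul, add_sub_cancel_right]

theorem homogOfDeg_X (i : σ) : HomogOfDeg k (X i) 1 := Or.inr ⟨1, rfl, isHomogeneous_X k i⟩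

end HomogOfDeg

section FreeModule

theorem mem_ideal_smul_top_finsupp_iff {A ι : Type*} [CommRing A] {K : Ideal A} {f : ι →₀ A} :
    f ∈ K • (⊤ : Submodule A (ι →₀ A)) ↔ ∀ s, f s ∈ K := by
  constructor
  · intro h s
    induction h using Submodule.smul_induction_on' with
    | smul r hr n _ => exact K.mul_mem_right _ hr
    | add x _ y _ hx hy => exact K.add_mem hx hy
  · intro h
    rw [← Finsupp.sum_single f]
    refine Submodule.sum_mem _ fun s _ => ?_
    rw [← mul_one (f s), ← smul_eq_mul, ← Finsupp.smul_single]
    exact Submodule.smul_mem_smul (h s) trivial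

theorem isPermRegular_X (σ R : Type*) [CommRing R] (s : Set σ) :
    IsPermRegular X s (⊥ : Ideal (MvPolynomial σ R)) := by
  classical
  intro t _ i hi
  rw [isSMulRegular_quotient_iff_mem_of_smul_mem]
  intro f hf
  rw [bot_sup_eq, smul_eq_mul, Ideal.mul_top, mem_ideal_span_X_image] at hf ⊢
  intro m hm
  obtain ⟨j, hj, hne⟩ := hf (Finsupp.single i 1 + m) (by
    rwa [mem_support_iff, smul_eq_mul, coeff_X_mul, ← mem_support_iff])
  have hij : i ≠ j := fun h => hi.2 (h ▸ hj)
  exact ⟨j, hj, by simpa [Finsupp.single_apply, hij] using hne⟩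

theorem IsPermRegular.finsupp {A σ : Type*} [CommRing A] {x : σ → A} {s : Set σ}
    (h : IsPermRegular x s (⊥ : Ideal A)) (ι : Type*) :
    IsPermRegular x s (⊥ : Submodule A (ι →₀ A)) := by
  intro t ht i hi
  have key := h t ht i hi
  rw [isSMulRegular_quotient_iff_mem_of_smul_mem] at key ⊢
  simp only [bot_sup_eq, smul_eq_mul, Ideal.mul_top] at key
  simp only [bot_sup_eq, mem_ideal_smul_top_finsupp_iff]
  exact fun f hf s => key (f s) (hf s)

variable {σ k : Type} [Field k] {ι κ H : Type*} [AddCommGroup H] [Module (MvPolynomial σ k) H]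

/-- The degree projections of the graded free module with generators in degrees `a`. -/
def freeProj (σ k : Type) [Field k] (a : ι → ℤ) (d : ℤ) :
    (ι →₀ MvPolynomial σ k) →+ (ι →₀ MvPolynomial σ k) :=
  Finsupp.liftAddHom fun s => (Finsupp.singleAddHom s).comp (intComponent σ k (d - a s))

theorem freeProj_single (a : ι → ℤ) (d : ℤ) (s : ι) (g : MvPolynomial σ k) :
    freeProj σ k a d (Finsupp.single s g) = Finsupp.single s (intComponent σ k (d - a s) g) := by
  simp [freeProj]

theorem freeProj_apply (a : ι → ℤ) (d : ℤ) (f : ι →₀ MvPolynomial σ k) (s : ι) :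
    freeProj σ k a d f s = intComponent σ k (d - a s) (f s) := by
  classical
  induction f using Finsupp.induction_linear with
  | zero => simp
  | add f g hf hg => simp [hf, hg]
  | single t g =>
    rw [freeProj_single]
    obtain rfl | h := eq_or_ne t s
    · simp
    · simp [h]

theorem freeProj_single_one (a : ι → ℤ) (s : ι) :
    freeProj σ k a (a s) (Finsupp.single s 1) = Finsupp.single s 1 := by
  have hone : HomogOfDeg k (1 : MvPolynomial σ k) 0 :=
    Or.inr ⟨0, Nat.cast_zero, isHomogeneous_one _ _⟩
  rw [freeProj_single, sub_self, homogOfDeg_iff_intComponent_eq.1 hone]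

theorem isDegreeProj_freeProj (a : ι → ℤ) :
    IsDegreeProj (X : σ → MvPolynomial σ k) (freeProj σ k a) where
  idem d f := by
    ext1 s
    simp only [freeProj_apply, intComponent_intComponent]
  smul i d f := by
    ext1 s
    simp only [freeProj_apply, Finsupp.smul_apply, ← (isDegreeProj_intComponent homogOfDeg_X).smul,
      add_sub_right_comm]

theorem map_freeProj {p' : ℤ → H →+ H} {a : ι → ℤ}
    {f : (ι →₀ MvPolynomial σ k) →ₗ[MvPolynomial σ k] H}
    (hf : ∀ s d g, p' d (g • f (Finsupp.single s 1)) =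
      intComponent σ k (d - a s) g • f (Finsupp.single s 1)) (d : ℤ) (m : ι →₀ MvPolynomial σ k) :
    f (freeProj σ k a d m) = p' d (f m) := by
  induction m using Finsupp.induction_linear with
  | zero => simp
  | add m m' hm hm' => simp [hm, hm']
  | single s g =>
    have hsingle (g : MvPolynomial σ k) :
        f (Finsupp.single s g) = g • f (Finsupp.single s 1) := by
      rw [← map_smul, Finsupp.smul_single, smul_eq_mul, mul_one]
    rw [freeProj_single, hsingle, hsingle g, hf]

theorem isRegularAbove_freeProj {a : ι → ℤ} {q : ℤ} (ha : ∀ s, a s ≤ q) {l : List σ}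
    (hl : l.Nodup) (hall : ∀ i, i ∈ l) :
    IsRegularAbove X (freeProj σ k a) q (⊤ : Submodule (MvPolynomial σ k) _) l ⊥ := by
  rw [← List.append_nil l]
  refine ((isPermRegular_X σ k _).finsupp ι).isRegularAbove_append hl (fun d hd m hm => ?_) []
  have hset : {i | i ∈ l} = Set.univ := Set.eq_univ_of_forall hall
  rw [bot_sup_eq, hset, Set.image_univ, mem_ideal_smul_top_finsupp_iff]
  intro s
  refine HomogOfDeg.mem_idealOfVars (d := d - a s) ?_ (by have := ha s; omega)
  rw [homogOfDeg_iff_intComponent_eq, ← freeProj_apply, hm]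

section MinimalPresentation

variable {p' : ℤ → H →+ H} {a : ι → ℤ} {q : ℤ}
  {f : (ι →₀ MvPolynomial σ k) →ₗ[MvPolynomial σ k] H}
  (hf : ∀ d m, f (freeProj σ k a d m) = p' d (f m)) (hmin : LinearMap.ker f ≤ idealOfVars σ k • ⊤)
  {l : List σ} (h : IsRegularAbove X p' q (LinearMap.range f) l ⊥)

theorem map_single_one_ne_zero_of_minimal
    (hmin : LinearMap.ker f ≤ idealOfVars σ k • ⊤) (s : ι) : f (Finsupp.single s 1) ≠ 0 := by
  intro h0
  simpa [mem_idealOfVars_iff] using mem_ideal_smul_top_finsupp_iff.1 (hmin h0) s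

include hf hmin h

theorem IsRegularAbove.generator_degree_le (s : ι) : a s ≤ q := by
  by_contra! hs
  have hmem : f (Finsupp.single s 1) ∈ idealOfVars σ k • LinearMap.range f :=
    h.mem_span_smul bot_le hs ⟨_, rfl⟩ (by rw [← hf, freeProj_single_one])
  rw [LinearMap.range_eq_map, ← Submodule.map_smul''] at hmem
  obtain ⟨m, hm, hfm⟩ := hmem
  have hker : Finsupp.single s 1 - m ∈ LinearMap.ker f := by
    rw [LinearMap.mem_ker, map_sub, hfm, sub_self]
  have h1 := mem_ideal_smul_top_finsupp_iff.1 (add_mem (hmin hker) hm) s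
  simp [mem_idealOfVars_iff] at h1

theorem IsRegularAbove.ker_of_minimal (hl : l.Nodup) (hall : ∀ i, i ∈ l) :
    IsRegularAbove X (freeProj σ k a) (q + 1) (LinearMap.ker f) l ⊥ :=
  .of_exact (isDegreeProj_freeProj a) hf (.ker hf) .bot le_rfl (by rw [sup_bot_eq]; rfl)
    (fun _ _ _ _ _ hw => hw)
    (isRegularAbove_freeProj (fun s => (h.generator_degree_le hf hmin s).trans (by omega)) hl hall)
    h

end MinimalPresentation

end FreeModule

namespace MinGradedFreeRes

variable {σ k : Type} [Field k]

section Module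

variable {M : Type} [AddCommGroup M] [Module (MvPolynomial σ k) M] [Module k M]
  {Mdeg : ℤ → Submodule k M} (res : MinGradedFreeRes k σ M Mdeg)

/-- The internal degree of a generator: `β i j` counts the generators of degree `i + j`. -/
def genDegree (i : ℕ) (s : (j : ℤ) × Fin (res.β i j)) : ℤ := i + s.1

theorem ker_ε : LinearMap.ker res.ε = LinearMap.range (res.d 0) :=
  Submodule.ext fun m => res.exact0 m

theorem ker_d (i : ℕ) : LinearMap.ker (res.d i) = LinearMap.range (res.d (i + 1)) :=
  Submodule.ext fun m => res.exactSeq i m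

theorem homogOfDeg_d (i : ℕ) (s : (j : ℤ) × Fin (res.β (i + 1) j))
    (s' : (j : ℤ) × Fin (res.β i j)) :
    HomogOfDeg k (res.d i (Finsupp.single s 1) s')
      (res.genDegree (i + 1) s - res.genDegree i s') := by
  convert res.graded i s.1 s'.1 s.2 s'.2 using 1
  simp only [genDegree]
  push_cast
  ring

theorem d_single_apply_eq_zero (i : ℕ) {s : (j : ℤ) × Fin (res.β (i + 1) j)}
    {s' : (j : ℤ) × Fin (res.β i j)} (h : res.genDegree (i + 1) s = res.genDegree i s') :
    res.d i (Finsupp.single s 1) s' = 0 := by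
  refine res.minimal i s.1 s'.1 s.2 s'.2 ?_
  simp only [genDegree] at h
  push_cast at h
  omega

theorem range_d_le (i : ℕ) : LinearMap.range (res.d i) ≤ idealOfVars σ k • ⊤ := by
  rintro _ ⟨m, rfl⟩
  induction m using Finsupp.induction_linear with
  | zero => simp
  | add m m' hm hm' => simpa using add_mem hm hm'
  | single s g =>
    rw [← mul_one g, ← smul_eq_mul, ← Finsupp.smul_single, map_smul]
    refine Submodule.smul_mem _ g (mem_ideal_smul_top_finsupp_iff.2 fun s' => ?_)
    obtain h | h := eq_or_ne (res.genDegree (i + 1) s) (res.genDegree i s')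
    · rw [res.d_single_apply_eq_zero i h]
      exact zero_mem _
    · exact (res.homogOfDeg_d i s s').mem_idealOfVars (sub_ne_zero.2 h)

theorem d_freeProj (i : ℕ) (d : ℤ) (m) :
    res.d i (freeProj σ k (res.genDegree (i + 1)) d m) =
      freeProj σ k (res.genDegree i) d (res.d i m) := by
  refine map_freeProj (fun s d g => ?_) d m
  ext1 s'
  rw [freeProj_apply, Finsupp.smul_apply, Finsupp.smul_apply, smul_eq_mul, smul_eq_mul,
    (res.homogOfDeg_d i s s').intComponent_mul, sub_sub_sub_cancel_right]

theorem add_le_genDegree {c : ℤ} (h0 : ∀ s, c ≤ res.genDegree 0 s) (i : ℕ) (s) :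
    c + i ≤ res.genDegree i s := by
  induction i with
  | zero => simpa using h0 s
  | succ i ih =>
    by_contra! h
    refine map_single_one_ne_zero_of_minimal
      ((res.ker_d i).trans_le (res.range_d_le (i + 1))) s ?_
    ext1 s'
    push_cast at h
    obtain heq | hne := eq_or_ne (res.genDegree (i + 1) s) (res.genDegree i s')
    · exact res.d_single_apply_eq_zero i heq
    · obtain h0 | ⟨m, hm, -⟩ := res.homogOfDeg_d i s s'
      · exact h0
      · have := ih s'
        omega

theorem isRegularAbove_range_d {q : ℤ} {l : List σ} (hl : l.Nodup) (hall : ∀ i, i ∈ l)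
    (h0 : IsRegularAbove X (freeProj σ k (res.genDegree 0)) (q + 1)
      (LinearMap.range (res.d 0)) l ⊥) (i : ℕ) :
    IsRegularAbove X (freeProj σ k (res.genDegree i)) (q + i + 1)
      (LinearMap.range (res.d i)) l ⊥ := by
  induction i with
  | zero => simpa using h0
  | succ i ih =>
    rw [← res.ker_d i, Nat.cast_succ, ← add_assoc q]
    exact ih.ker_of_minimal (res.d_freeProj i)
      ((res.ker_d i).trans_le (res.range_d_le (i + 1))) hl hall

end Module

variable {N : ℕ} {T : Ideal (MvPolynomial (Fin N) k)}
  (res : MinGradedFreeRes k (Fin N) T (idealDeg k T))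

theorem homogOfDeg_ε (s) :
    HomogOfDeg k (res.ε (Finsupp.single s 1) : MvPolynomial (Fin N) k) (res.genDegree 0 s) := by
  have h := res.eps_graded s.1 s.2
  have hdeg : res.genDegree 0 s = s.1 := by simp [genDegree]
  rw [hdeg]
  unfold idealDeg at h
  split_ifs at h with hs
  · exact Or.inr ⟨s.1.toNat, Int.toNat_of_nonneg hs, h⟩
  · exact Or.inl (congrArg Subtype.val h)

theorem linear_of_isRegularAbove {c : ℤ} {l : List (Fin N)} (hl : l.Nodup) (hall : ∀ i, i ∈ l)
    (hreg : IsRegularAbove X (intComponent (Fin N) k) c T l ⊥)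
    (hlow : ∀ f ∈ T, ∀ d < c, HomogOfDeg k f d → f = 0) {i : ℕ} {j : ℤ} (hij : res.β i j ≠ 0) :
    j = c := by
  set ε := T.subtype ∘ₗ res.ε
  have hker : LinearMap.ker ε = LinearMap.range (res.d 0) := by
    rw [LinearMap.ker_comp_of_ker_eq_bot _ T.ker_subtype, res.ker_ε]
  have hmin : LinearMap.ker ε ≤ idealOfVars (Fin N) k • ⊤ := hker.trans_le (res.range_d_le 0)
  have hrange : LinearMap.range ε = T := by
    rw [LinearMap.range_comp, LinearMap.range_eq_top.2 res.eps_surj, Submodule.map_top,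
      Submodule.range_subtype]
  have hε := map_freeProj (f := ε) fun s d g => (res.homogOfDeg_ε s).intComponent_mul d g
  rw [← hrange] at hreg
  have hlower := res.add_le_genDegree (c := c) fun s => by
    by_contra! h
    exact map_single_one_ne_zero_of_minimal hmin s
      (hlow _ (res.ε (Finsupp.single s 1)).2 _ h (res.homogOfDeg_ε s))
  have hupper : ∀ i s, res.genDegree i s ≤ c + i := by
    rintro (_ | i) s
    · simpa using hreg.generator_degree_le hε hmin s
    · have hreg' := res.isRegularAbove_range_d hl hall
        (hker ▸ hreg.ker_of_minimal hε hmin hl hall) i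
      have := hreg'.generator_degree_le (res.d_freeProj i)
        ((res.ker_d i).trans_le (res.range_d_le (i + 1))) s
      push_cast
      linarith
  let s : (j : ℤ) × Fin (res.β i j) := ⟨j, 0, Nat.pos_of_ne_zero hij⟩
  have h1 := hlower i s
  have h2 := hupper i s
  simp only [genDegree, s] at h1 h2
  omega

end MinGradedFreeRes

section WeaklyRegular

open RingTheory.Sequence

variable {A σ M : Type*} [CommRing A] [AddCommGroup M] [Module A M]

theorem smul_top_eq_span_singleton (a : A) : a • (⊤ : Ideal A) = Ideal.span {a} := by
  rw [← Submodule.ideal_span_singleton_smul, smul_eq_mul, Ideal.mul_top]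

theorem isWeaklyRegular_quotient_cons_iff {Q : Submodule A M} {a : A} {l : List A} :
    IsWeaklyRegular (M ⧸ Q) (a :: l) ↔
      IsSMulRegular (M ⧸ Q) a ∧ IsWeaklyRegular (M ⧸ (Q ⊔ a • ⊤)) l := by
  have hmap : a • (⊤ : Submodule A (M ⧸ Q)) = (a • (⊤ : Submodule A M)).map Q.mkQ := by
    rw [Submodule.map_pointwise_smul, Submodule.map_top, Submodule.range_mkQ]
  let e : QuotSMulTop a (M ⧸ Q) ≃ₗ[A] M ⧸ (Q ⊔ a • ⊤) :=
    Submodule.quotEquivOfEq _ _ hmap ≪≫ₗ Submodule.quotientQuotientEquivQuotientSup Q (a • ⊤)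
  rw [isWeaklyRegular_cons_iff, e.isWeaklyRegular_congr]

theorem IsPermRegular.isWeaklyRegular {x : σ → A} {Q : Submodule A M} {l : List σ} (hl : l.Nodup)
    (h : IsPermRegular x {i | i ∈ l} Q) : IsWeaklyRegular (M ⧸ Q) (l.map x) := by
  induction l generalizing Q with
  | nil => exact .nil A _
  | cons i l ih =>
    obtain ⟨hil, hl⟩ := List.nodup_cons.1 hl
    have hset : {j | j ∈ i :: l} = insert i {j | j ∈ l} := by ext; simp
    rw [hset] at h
    have hi := h ∅ (Set.empty_subset _) i ⟨Set.mem_insert _ _, Set.notMem_empty i⟩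
    rw [Set.image_empty, Ideal.span_empty, Submodule.bot_smul, sup_bot_eq] at hi
    exact isWeaklyRegular_quotient_cons_iff.2 ⟨hi, ih hl (h.of_insert hil)⟩

end WeaklyRegular

section IdealHomog

variable {k : Type} [Field k] {N : ℕ} {I J : Ideal (MvPolynomial (Fin N) k)}

attribute [local instance] MvPolynomial.gradedAlgebra in
theorem idealHomog_iff_isHomogeneous :
    IdealHomog k I ↔ I.IsHomogeneous (homogeneousSubmodule (Fin N) k) := by
  refine ⟨fun h d f hf => ?_, fun h f hf d => homogeneousComponent_mem_of_mem h hf d⟩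
  exact (decomposition.decompose'_apply f d).symm ▸ h f hf d

attribute [local instance] MvPolynomial.gradedAlgebra in
theorem IdealHomog.sup (hI : IdealHomog k I) (hJ : IdealHomog k J) : IdealHomog k (I ⊔ J) := by
  rw [idealHomog_iff_isHomogeneous] at *
  exact hI.sup hJ

attribute [local instance] MvPolynomial.gradedAlgebra in
theorem idealHomog_span {s : Set (MvPolynomial (Fin N) k)} {d : ℕ}
    (hs : ∀ f ∈ s, f.IsHomogeneous d) : IdealHomog k (Ideal.span s) :=
  idealHomog_iff_isHomogeneous.2 (Ideal.homogeneous_span _ _ fun f hf => ⟨d, hs f hf⟩)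

theorem IdealHomog.isGradedSubmodule (hI : IdealHomog k I) :
    IsGradedSubmodule (intComponent (Fin N) k) I := by
  intro d f hf
  obtain hd | hd := le_or_gt 0 d
  · lift d to ℕ using hd
    rw [intComponent_natCast]
    exact hI f hf d
  · convert zero_mem I
    ext m
    rw [coeff_intComponent, if_neg (by omega), coeff_zero]

theorem IdealHomog.exists_X_pow_mem (hI : IdealHomog k I)
    [Module.Finite k (MvPolynomial (Fin N) k ⧸ I)] (i : Fin N) : ∃ m : ℕ, X i ^ m ∈ I := by
  obtain ⟨p, hp, hp0⟩ := IsIntegral.of_finite k (Ideal.Quotient.mkₐ k I (X i))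
  have hmem : Polynomial.aeval (X i) p ∈ I := by
    rw [← Ideal.Quotient.eq_zero_iff_mem, ← hp0]
    exact (Polynomial.aeval_algHom_apply (Ideal.Quotient.mkₐ k I) (X i) p).symm
  have hlead : homogeneousComponent p.natDegree
      (Polynomial.aeval (X i : MvPolynomial (Fin N) k) p) = X i ^ p.natDegree := by
    rw [Polynomial.aeval_eq_sum_range, map_sum, Finset.sum_eq_single p.natDegree]
    · rw [map_smul, homogeneousComponent_eq_self (isHomogeneous_X_pow i _), hp.coeff_natDegree,
        one_smul]
    · intro b _ hb
      rw [map_smul, homogeneousComponent_of_mem (isHomogeneous_X_pow i b), if_neg hb.symm,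
        smul_zero]
    · simp
  exact ⟨p.natDegree, hlead ▸ hI _ hmem _⟩

theorem IdealHomog.exists_pow_idealOfVars_le (hI : IdealHomog k I)
    [Module.Finite k (MvPolynomial (Fin N) k ⧸ I)] : ∃ m : ℕ, idealOfVars (Fin N) k ^ m ≤ I := by
  refine Ideal.exists_pow_le_of_le_radical_of_fg (Ideal.span_le.2 ?_) (idealOfVars_fg _ _)
  rintro _ ⟨i, rfl⟩
  exact hI.exists_X_pow_mem i

theorem mem_pow_idealOfVars_of_isHomogeneous {σ R : Type*} [CommSemiring R]
    {f : MvPolynomial σ R} {n d : ℕ} (hf : f.IsHomogeneous d) (h : n ≤ d) :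
    f ∈ idealOfVars σ R ^ n :=
  (mem_pow_idealOfVars_iff' n f).2 fun _ hm => hf.coeff_eq_zero (by omega)

theorem pow_idealOfVars_le {σ R : Type*} [CommSemiring R] {J : Ideal (MvPolynomial σ R)} {n : ℕ}
    (h : ∀ f : MvPolynomial σ R, f.IsHomogeneous n → f ∈ J) : idealOfVars σ R ^ n ≤ J := by
  rw [pow_idealOfVars_eq_span, Ideal.span_le]
  rintro _ ⟨m, hm, rfl⟩
  exact h _ (isHomogeneous_monomial 1 hm)

end IdealHomog

theorem finite_quotient_of_finite_algHom {k σ A : Type*} [CommRing k] [CommRing A] [Algebra k A]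
    {φ : MvPolynomial σ k →ₐ[k] A} (hφ : φ.toRingHom.Finite) {J : Ideal A}
    (hJ : ∀ i, φ (X i) ∈ J) : Module.Finite k (A ⧸ J) := by
  have hfinite : ((Ideal.Quotient.mk J).comp φ.toRingHom).Finite :=
    (RingHom.Finite.of_surjective _ Ideal.Quotient.mk_surjective).comp hφ
  have hfactor : (Ideal.Quotient.mk J).comp φ.toRingHom =
      (algebraMap k (A ⧸ J)).comp constantCoeff := by
    refine ringHom_ext (fun a => ?_) fun i => ?_
    · simp
    · simpa using Ideal.Quotient.eq_zero_iff_mem.2 (hJ i)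
  rw [hfactor] at hfinite
  exact RingHom.finite_algebraMap.1 hfinite.of_comp_finite

section TailIdeal

variable {k : Type} [Field k] {N : ℕ}

/-- The ideal of `S₀` generated by the Noether normalizing variables `x_e, …, x_{N-1}`. -/
def tailIdeal (k : Type) [Field k] (N e : ℕ) : Ideal (MvPolynomial (Fin N) k) :=
  Ideal.span (X '' {i : Fin N | e ≤ (i : ℕ)})

theorem idealHomog_tailIdeal (e : ℕ) : IdealHomog k (tailIdeal k N e) :=
  idealHomog_span (d := 1) (by rintro _ ⟨i, -, rfl⟩; exact isHomogeneous_X k i)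

variable {e : ℕ} {I : Ideal (MvPolynomial (Fin N) k)}

theorem tailVarsIdeal_eq_map :
    tailVarsIdeal k e I = (tailIdeal k N e).map (Ideal.Quotient.mkₐ k I) := by
  rw [tailIdeal, Ideal.map_span, tailVarsIdeal, Set.image_image]
  congr 1
  ext y
  simp [eq_comm]

theorem mk_mem_tailVarsIdeal_iff {f : MvPolynomial (Fin N) k} :
    Ideal.Quotient.mk I f ∈ tailVarsIdeal k e I ↔ f ∈ I ⊔ tailIdeal k N e := by
  rw [tailVarsIdeal_eq_map, sup_comm]
  exact Ideal.mem_quotient_iff_mem_sup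

/-- `R / S₊R` as a quotient of `S₀`. -/
def quotTailVarsIdealEquiv (e : ℕ) (I : Ideal (MvPolynomial (Fin N) k)) :
    ((MvPolynomial (Fin N) k ⧸ I) ⧸ tailVarsIdeal k e I) ≃ₐ[k]
      MvPolynomial (Fin N) k ⧸ (I ⊔ tailIdeal k N e) :=
  (Ideal.quotientEquivAlgOfEq k tailVarsIdeal_eq_map).trans
    (DoubleQuot.quotQuotEquivQuotSupₐ k I (tailIdeal k N e))

theorem IsNoetherNormalization.finite_quotient (hNN : IsNoetherNormalization k e I) :
    Module.Finite k (MvPolynomial (Fin N) k ⧸ (I ⊔ tailIdeal k N e)) := by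
  have : Module.Finite k ((MvPolynomial (Fin N) k ⧸ I) ⧸ tailVarsIdeal k e I) :=
    finite_quotient_of_finite_algHom hNN.2 fun i =>
      Ideal.subset_span ⟨i.1, i.2, by simp [nnMap]⟩
  exact Module.Finite.equiv (quotTailVarsIdealEquiv e I).toLinearEquiv

theorem reductionNumber_spec {r : ℕ} (hI : IdealHomog k I)
    (hNN : IsNoetherNormalization k e I) (hr : reductionNumber k e I = r) :
    0 < r ∧ idealOfVars (Fin N) k ^ (r + 1) ≤ I ⊔ tailIdeal k N e := by
  have := hNN.finite_quotient
  obtain ⟨s, hs⟩ := (hI.sup (idealHomog_tailIdeal e)).exists_pow_idealOfVars_le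
  have hne : {t | 0 < t ∧ quotComponent k I (t + 1) ≤
      (tailVarsIdeal k e I).restrictScalars k}.Nonempty := by
    refine ⟨s + 1, s.succ_pos, ?_⟩
    rintro _ ⟨f, hf, rfl⟩
    exact mk_mem_tailVarsIdeal_iff.2 (hs (mem_pow_idealOfVars_of_isHomogeneous hf (by omega)))
  obtain ⟨hpos, hle⟩ := Nat.sInf_mem hne
  subst hr
  exact ⟨hpos, pow_idealOfVars_le fun f hf => mk_mem_tailVarsIdeal_iff.1 (hle ⟨f, hf, rfl⟩)⟩

end TailIdeal

theorem finrank_map_add_finrank_inf_ker {K V V' : Type*} [Field K] [AddCommGroup V] [Module K V]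
    [AddCommGroup V'] [Module K V'] (f : V →ₗ[K] V') (p : Submodule K V) [Module.Finite K p] :
    Module.finrank K (p.map f) + Module.finrank K (p ⊓ LinearMap.ker f : Submodule K V) =
      Module.finrank K p := by
  rw [← (f.domRestrict p).finrank_range_add_finrank_ker, LinearMap.range_domRestrict,
    LinearMap.ker_domRestrict, ← Submodule.map_comap_subtype, Submodule.finrank_map_subtype_eq]

section PartialSum

/-- The summation operator on functions `ℕ → ℕ`; on Hilbert functions it undoes the passage to
the quotient by a regular linear form. -/
def partialSum (F : ℕ → ℕ) (d : ℕ) : ℕ := ∑ j ∈ Finset.range (d + 1), F j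

theorem partialSum_succ (F : ℕ → ℕ) (d : ℕ) :
    partialSum F (d + 1) = partialSum F d + F (d + 1) :=
  Finset.sum_range_succ F (d + 1)

theorem iterate_partialSum_succ (c : ℕ) (F : ℕ → ℕ) (d : ℕ) :
    partialSum^[c + 1] F d = ∑ j ∈ Finset.range (d + 1), F j * (c + (d - j)).choose c := by
  induction c generalizing d with
  | zero => simp [partialSum]
  | succ c ih =>
    rw [Function.iterate_succ_apply']
    induction d with
    | zero => simp [partialSum, ih]
    | succ d ihd =>
      rw [partialSum_succ, ihd, ih, Finset.sum_range_succ _ (d + 1),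
        Finset.sum_range_succ _ (d + 1), ← add_assoc, ← Finset.sum_add_distrib]
      congr 1
      · refine Finset.sum_congr rfl fun j hj => ?_
        have hjd : j ≤ d := by grind
        rw [show c + 1 + (d + 1 - j) = c + (d + 1 - j) + 1 by omega, Nat.choose_succ_succ,
          show c + 1 + (d - j) = c + (d + 1 - j) by omega]
        ring
      · simp

theorem iterate_partialSum_ite (c d : ℕ) :
    partialSum^[c + 1] (fun d => if d = 0 then 1 else 0) d = (c + d).choose c := by
  rw [iterate_partialSum_succ, Finset.sum_eq_single 0]
  · simp
  · intro b _ hb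
    simp [hb]
  · simp

end PartialSum

section HilbertFunction

variable {k : Type} [Field k] {N : ℕ} {I : Ideal (MvPolynomial (Fin N) k)}

instance instFiniteHomogeneousSubmodule (d : ℕ) :
    Module.Finite k (homogeneousSubmodule (Fin N) k d) :=
  Module.Finite.iff_fg.2 (homogeneousSubmodule_fg _ _ d)

instance instFiniteQuotComponent (d : ℕ) : Module.Finite k (quotComponent k I d) :=
  inferInstanceAs (Module.Finite k (Submodule.map _ _))

/-- The graded piece `I_d` of an ideal, as a subspace of the polynomial ring. -/
def homogeneousPart (I : Ideal (MvPolynomial (Fin N) k)) (d : ℕ) :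
    Submodule k (MvPolynomial (Fin N) k) :=
  homogeneousSubmodule (Fin N) k d ⊓ I.restrictScalars k

instance instFiniteHomogeneousPart (d : ℕ) : Module.Finite k (homogeneousPart I d) :=
  inferInstanceAs (Module.Finite k ↥(homogeneousSubmodule (Fin N) k d ⊓ I.restrictScalars k))

theorem hilbFn_add_finrank_homogeneousPart (I : Ideal (MvPolynomial (Fin N) k)) (d : ℕ) :
    hilbFn k I d + Module.finrank k (homogeneousPart I d) =
      Module.finrank k (homogeneousSubmodule (Fin N) k d) := by
  have hker : LinearMap.ker (Ideal.Quotient.mkₐ k I).toLinearMap = I.restrictScalars k := by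
    ext f
    exact Ideal.Quotient.eq_zero_iff_mem
  rw [homogeneousPart, ← hker]
  exact finrank_map_add_finrank_inf_ker _ _

theorem finrank_idealDeg (I : Ideal (MvPolynomial (Fin N) k)) (d : ℕ) :
    Module.finrank k (idealDeg k I d) = Module.finrank k (homogeneousPart I d) := by
  have hmap : (idealDeg k I d).map (I.subtype.restrictScalars k) = homogeneousPart I d := by
    rw [idealDeg, if_pos d.cast_nonneg, Int.toNat_natCast, homogeneousPart, inf_comm]
    exact Submodule.map_comap_subtype (I.restrictScalars k) _
  rw [← hmap]
  exact (Submodule.equivMapOfInjective (I.subtype.restrictScalars k) Subtype.val_injective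
    _).finrank_eq

theorem map_quotComponent_factor {J : Ideal (MvPolynomial (Fin N) k)} (h : I ≤ J) (d : ℕ) :
    (quotComponent k I d).map (Ideal.Quotient.factorₐ k h).toLinearMap = quotComponent k J d := by
  rw [quotComponent, ← Submodule.map_comp, quotComponent]
  rfl

theorem hilbFn_anti {J : Ideal (MvPolynomial (Fin N) k)} (h : I ≤ J) (d : ℕ) :
    hilbFn k J d ≤ hilbFn k I d := by
  rw [hilbFn, ← map_quotComponent_factor h]
  exact Submodule.finrank_map_le _ _

theorem IdealHomog.exists_of_mem_sup_smul (hI : IdealHomog k I) {z f : MvPolynomial (Fin N) k}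
    (hz : z.IsHomogeneous 1) {d : ℕ} (hf : f.IsHomogeneous d) (hfI : f ∈ I ⊔ z • ⊤) :
    ∃ g : MvPolynomial (Fin N) k, HomogOfDeg k g (d - 1) ∧ f - z * g ∈ I := by
  have hp : IsDegreeProj (fun _ : Unit => z) (intComponent (Fin N) k) :=
    isDegreeProj_intComponent fun _ => Or.inr ⟨1, rfl, hz⟩
  obtain ⟨a, ha, -, g, -, hg, rfl⟩ := hp.exists_homogeneous_of_mem_sup_smul hI.isGradedSubmodule
    .top (i := ()) (homogOfDeg_iff_intComponent_eq.1 (Or.inr ⟨d, rfl, hf⟩)) hfI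
  exact ⟨g, homogOfDeg_iff_intComponent_eq.2 hg, by simpa using ha⟩

theorem homogOfDeg_natCast_iff {σ : Type} {f : MvPolynomial σ k} {d : ℕ} :
    HomogOfDeg k f d ↔ f.IsHomogeneous d := by
  refine ⟨?_, fun h => Or.inr ⟨d, rfl, h⟩⟩
  rintro (rfl | ⟨m, hm, hf⟩)
  · exact isHomogeneous_zero _ _ _
  · rwa [← Nat.cast_inj.1 hm]

theorem quotComponent_inf_ker_factor (hI : IdealHomog k I) {z : MvPolynomial (Fin N) k}
    (hz : z.IsHomogeneous 1) (d : ℕ) :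
    quotComponent k I (d + 1) ⊓
        LinearMap.ker (Ideal.Quotient.factorₐ k (le_sup_left : I ≤ I ⊔ z • ⊤)).toLinearMap =
      (quotComponent k I d).map (LinearMap.mulLeft k (Ideal.Quotient.mk I z)) := by
  apply le_antisymm
  · rintro _ ⟨⟨f, hf, rfl⟩, hker⟩
    obtain ⟨g, hg, hfg⟩ := hI.exists_of_mem_sup_smul hz hf (Ideal.Quotient.eq_zero_iff_mem.1 hker)
    refine ⟨Ideal.Quotient.mk I g, ⟨g, ?_, rfl⟩, ?_⟩
    · rwa [Nat.cast_succ, add_sub_cancel_right, homogOfDeg_natCast_iff] at hg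
    · exact (Ideal.Quotient.eq.2 hfg).symm
  · rintro _ ⟨_, ⟨g, hg, rfl⟩, rfl⟩
    refine ⟨⟨z * g, add_comm 1 d ▸ hz.mul hg, rfl⟩, Ideal.Quotient.eq_zero_iff_mem.2 ?_⟩
    rw [smul_top_eq_span_singleton]
    exact Ideal.mem_sup_right (Ideal.mul_mem_right _ _ (Ideal.mem_span_singleton_self z))

theorem hilbFn_sup_smul_zero (hI : IdealHomog k I) {z : MvPolynomial (Fin N) k}
    (hz : z.IsHomogeneous 1) : hilbFn k (I ⊔ z • ⊤) 0 = hilbFn k I 0 := by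
  have hker : quotComponent k I 0 ⊓
      LinearMap.ker (Ideal.Quotient.factorₐ k (le_sup_left : I ≤ I ⊔ z • ⊤)).toLinearMap = ⊥ := by
    rw [eq_bot_iff]
    rintro _ ⟨⟨f, hf, rfl⟩, hker⟩
    obtain ⟨g, rfl | ⟨m, hm, -⟩, hfg⟩ :=
      hI.exists_of_mem_sup_smul hz hf (Ideal.Quotient.eq_zero_iff_mem.1 hker)
    · exact Ideal.Quotient.eq_zero_iff_mem.2 (by simpa using hfg)
    · omega
  have key := finrank_map_add_finrank_inf_ker
    (Ideal.Quotient.factorₐ k (le_sup_left : I ≤ I ⊔ z • ⊤)).toLinearMap (quotComponent k I 0)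
  rwa [hker, finrank_bot, map_quotComponent_factor] at key

theorem hilbFn_sup_smul_succ (hI : IdealHomog k I) {z : MvPolynomial (Fin N) k}
    (hz : z.IsHomogeneous 1) (hreg : IsSMulRegular (MvPolynomial (Fin N) k ⧸ I) z) (d : ℕ) :
    hilbFn k (I ⊔ z • ⊤) (d + 1) + hilbFn k I d = hilbFn k I (d + 1) := by
  have key := finrank_map_add_finrank_inf_ker
    (Ideal.Quotient.factorₐ k (le_sup_left : I ≤ I ⊔ z • ⊤)).toLinearMap
    (quotComponent k I (d + 1))
  rw [quotComponent_inf_ker_factor hI hz, map_quotComponent_factor] at key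
  rwa [← (Submodule.equivMapOfInjective (LinearMap.mulLeft k (Ideal.Quotient.mk I z)) hreg
    (quotComponent k I d)).finrank_eq] at key

theorem hilbFn_eq_partialSum (hI : IdealHomog k I) {z : MvPolynomial (Fin N) k}
    (hz : z.IsHomogeneous 1) (hreg : IsSMulRegular (MvPolynomial (Fin N) k ⧸ I) z) :
    hilbFn k I = partialSum (hilbFn k (I ⊔ z • ⊤)) := by
  funext d
  induction d with
  | zero => simp [partialSum, hilbFn_sup_smul_zero hI hz]
  | succ d ih =>
    rw [partialSum_succ, ← ih, add_comm (hilbFn k I d), hilbFn_sup_smul_succ hI hz hreg]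

theorem hilbFn_eq_iterate_partialSum {l : List (MvPolynomial (Fin N) k)} (hI : IdealHomog k I)
    (hl : ∀ z ∈ l, z.IsHomogeneous 1)
    (hreg : RingTheory.Sequence.IsWeaklyRegular (MvPolynomial (Fin N) k ⧸ I) l) :
    hilbFn k I = partialSum^[l.length] (hilbFn k (I ⊔ Ideal.ofList l)) := by
  induction l generalizing I with
  | nil => simp
  | cons z l ih =>
    obtain ⟨hz, hl⟩ := List.forall_mem_cons.1 hl
    obtain ⟨hzreg, hreg⟩ := isWeaklyRegular_quotient_cons_iff.1 hreg
    have hI' : IdealHomog k (I ⊔ z • ⊤) :=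
      hI.sup (smul_top_eq_span_singleton z ▸ idealHomog_span (d := 1) (by simpa using hz))
    rw [List.length_cons, Function.iterate_succ_apply', hilbFn_eq_partialSum hI hz hzreg,
      ih hI' hl hreg, Ideal.ofList_cons, ← smul_top_eq_span_singleton, sup_assoc]

theorem IsPermRegular.hilbFn_eq {s : Set (Fin N)} (hI : IdealHomog k I)
    (hreg : IsPermRegular X s I) :
    hilbFn k I = partialSum^[s.ncard] (hilbFn k (I ⊔ Ideal.span (X '' s))) := by
  classical
  set l := s.toFinite.toFinset.toList
  have hls : {i | i ∈ l} = s := by ext; simp [l]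
  have hweak := (hls.symm ▸ hreg).isWeaklyRegular (Finset.nodup_toList _)
  rw [hilbFn_eq_iterate_partialSum hI (by simp [isHomogeneous_X]) hweak, List.length_map,
    Finset.length_toList, ← Set.ncard_eq_toFinset_card]
  congr 3
  rw [Ideal.ofList]
  congr 1
  ext; simp [← hls]

theorem hilbFn_zero (hI : I ≠ ⊤) : hilbFn k I 0 = 1 := by
  have : Nontrivial (MvPolynomial (Fin N) k ⧸ I) := Ideal.Quotient.nontrivial_iff.2 hI
  rw [hilbFn, quotComponent, homogeneousSubmodule_zero, Submodule.one_eq_span, Submodule.map_span,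
    Set.image_singleton]
  exact finrank_span_singleton (by simp)

theorem quotComponent_eq_bot {n d : ℕ} (hI : idealOfVars (Fin N) k ^ n ≤ I) (hd : n ≤ d) :
    quotComponent k I d = ⊥ := by
  rw [eq_bot_iff]
  rintro _ ⟨f, hf, rfl⟩
  exact Ideal.Quotient.eq_zero_iff_mem.2 (hI (mem_pow_idealOfVars_of_isHomogeneous hf hd))

theorem hilbFn_eq_zero {n d : ℕ} (hI : idealOfVars (Fin N) k ^ n ≤ I) (hd : n ≤ d) :
    hilbFn k I d = 0 := by
  rw [hilbFn, quotComponent_eq_bot hI hd, finrank_bot]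

theorem hilbFn_idealOfVars :
    hilbFn k (idealOfVars (Fin N) k) = fun d => if d = 0 then 1 else 0 := by
  funext d
  split_ifs with hd
  · rw [hd, hilbFn_zero idealOfVars_ne_top]
  · exact hilbFn_eq_zero (pow_one _).le (Nat.one_le_iff_ne_zero.2 hd)

theorem ncard_setOf_val_lt {e : ℕ} (he : e ≤ N) : {i : Fin N | (i : ℕ) < e}.ncard = e := by
  rw [Set.ncard_eq_toFinset_card', Set.toFinset_ofPred, Fin.card_filter_val_lt, min_eq_right he]

theorem ncard_setOf_le_val (e : ℕ) : {i : Fin N | e ≤ (i : ℕ)}.ncard = N - e := by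
  have hcompl : {i : Fin N | e ≤ (i : ℕ)} = {i : Fin N | (i : ℕ) < e}ᶜ := by
    ext; simp
  rw [hcompl, Set.ncard_compl, Set.ncard_eq_toFinset_card', Set.toFinset_ofPred,
    Fin.card_filter_val_lt, Nat.card_fin]
  omega

theorem hilbFn_bot (e : ℕ) :
    hilbFn k (⊥ : Ideal (MvPolynomial (Fin N) k)) =
      partialSum^[N - e] (hilbFn k (tailIdeal k N e)) := by
  have hbot : IdealHomog k (⊥ : Ideal (MvPolynomial (Fin N) k)) := by
    simpa using idealHomog_span (k := k) (N := N) (s := ∅) (d := 0) (by simp)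
  rw [(isPermRegular_X (Fin N) k {i | e ≤ (i : ℕ)}).hilbFn_eq hbot, ncard_setOf_le_val, bot_sup_eq,
    tailIdeal]

theorem hilbFn_tailIdeal {e : ℕ} (he : 0 < e) (heN : e ≤ N) (d : ℕ) :
    hilbFn k (tailIdeal k N e) d = (e - 1 + d).choose (e - 1) := by
  have hunion : {i : Fin N | (i : ℕ) < e} ∪ {i | e ≤ (i : ℕ)} = Set.univ := by
    ext i; simp [lt_or_ge]
  have hdisj : Disjoint {i : Fin N | (i : ℕ) < e} {i | e ≤ (i : ℕ)} :=
    Set.disjoint_left.2 fun _ hi => Nat.not_le_of_gt hi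
  have hreg := (isPermRegular_X (Fin N) k _).of_union hdisj
  rw [bot_sup_eq, smul_eq_mul, Ideal.mul_top, ← tailIdeal] at hreg
  rw [hreg.hilbFn_eq (idealHomog_tailIdeal e), ncard_setOf_val_lt heN, tailIdeal,
    ← Ideal.span_union, ← Set.image_union, Set.union_comm, hunion, Set.image_univ]
  obtain ⟨c, rfl⟩ := Nat.exists_eq_succ_of_ne_zero he.ne'
  exact hilbFn_idealOfVars (k := k) (N := N) ▸ iterate_partialSum_ite c d

theorem sum_hilbFn_tailIdeal {e : ℕ} (he : 0 < e) (heN : e ≤ N) (r : ℕ) :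
    ∑ d ∈ Finset.range (r + 1), hilbFn k (tailIdeal k N e) d = (e + r).choose r := by
  obtain ⟨c, rfl⟩ := Nat.exists_eq_succ_of_ne_zero he.ne'
  have key := Nat.sum_range_add_choose r c
  rw [add_assoc, ← Nat.choose_symm_add] at key
  rw [add_comm (c + 1), ← key]
  exact Finset.sum_congr rfl fun d _ => by
    rw [hilbFn_tailIdeal he heN, Nat.succ_sub_one, add_comm]

end HilbertFunction

section Multiplicity

variable {k : Type} [Field k] {N : ℕ} {I : Ideal (MvPolynomial (Fin N) k)}

theorem IdealHomog.iSupIndep_quotComponent (hI : IdealHomog k I) :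
    iSupIndep (quotComponent k I) := by
  intro d
  rw [Submodule.disjoint_def]
  rintro _ ⟨f, hf, rfl⟩ hsup
  simp only [quotComponent, ← Submodule.map_iSup] at hsup
  obtain ⟨g, hg, hgf⟩ := hsup
  have hgd : homogeneousComponent d g = 0 := by
    have hle : ⨆ j, ⨆ _ : j ≠ d, homogeneousSubmodule (Fin N) k j ≤
        LinearMap.ker (homogeneousComponent d) :=
      iSup₂_le fun j hj p hp => by
        rw [LinearMap.mem_ker, homogeneousComponent_of_mem hp, if_neg hj.symm]
    exact hle hg
  have key := hI _ (Ideal.Quotient.eq.1 hgf) d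
  rw [map_sub, hgd, homogeneousComponent_eq_self hf, zero_sub, neg_mem_iff] at key
  exact Ideal.Quotient.eq_zero_iff_mem.2 key

theorem iSup_quotComponent (I : Ideal (MvPolynomial (Fin N) k)) :
    ⨆ d, quotComponent k I d = ⊤ := by
  refine eq_top_iff.2 fun b _ => ?_
  obtain ⟨f, rfl⟩ := Ideal.Quotient.mk_surjective b
  rw [← sum_homogeneousComponent f, map_sum]
  exact Submodule.sum_mem _ fun d _ => Submodule.mem_iSup_of_mem d
    ⟨_, homogeneousComponent_isHomogeneous d f, rfl⟩

theorem finrank_quotient_eq_sum_hilbFn (hI : IdealHomog k I) {n : ℕ}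
    (hn : idealOfVars (Fin N) k ^ n ≤ I) :
    Module.finrank k (MvPolynomial (Fin N) k ⧸ I) = ∑ d ∈ Finset.range n, hilbFn k I d := by
  have htop : ⨆ d : Fin n, quotComponent k I d = ⊤ := by
    refine eq_top_iff.2 ((iSup_quotComponent I).ge.trans (iSup_le fun d => ?_))
    obtain hd | hd := lt_or_ge d n
    · exact le_iSup_of_le ⟨d, hd⟩ le_rfl
    · exact quotComponent_eq_bot hn hd ▸ bot_le
  have hint := DirectSum.isInternal_submodule_of_iSupIndep_of_iSup_eq_top
    (hI.iSupIndep_quotComponent.comp Fin.val_injective) htop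
  have (i : Fin n) : Module.Finite k ((quotComponent k I ∘ Fin.val) i) :=
    instFiniteQuotComponent i.1
  rw [← (LinearEquiv.ofBijective (DirectSum.coeLinearMap _) hint).finrank_eq,
    Module.finrank_directSum, ← Fin.sum_univ_eq_sum_range]
  rfl

theorem muS_eq_finrank (e : ℕ) (I : Ideal (MvPolynomial (Fin N) k)) :
    muS k e I = Module.finrank k (MvPolynomial (Fin N) k ⧸ (I ⊔ tailIdeal k N e)) :=
  (quotTailVarsIdealEquiv e I).toLinearEquiv.finrank_eq

theorem muS_eq_sum_hilbFn {e n : ℕ} (hI : IdealHomog k I)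
    (hn : idealOfVars (Fin N) k ^ n ≤ I ⊔ tailIdeal k N e) :
    muS k e I = ∑ d ∈ Finset.range n, hilbFn k (I ⊔ tailIdeal k N e) d := by
  rw [muS_eq_finrank, finrank_quotient_eq_sum_hilbFn (hI.sup (idealHomog_tailIdeal e)) hn]

end Multiplicity

section FreeSpan

variable {R σ : Type*} [CommRing R] {s : Set σ} {L : Set (σ →₀ ℕ)}

open Classical in
/-- The polynomials all of whose exponents lie in `L` once the variables in `s` are set to one.
When `L` avoids the variables in `s`, this is the free module with basis the monomials in `L` over
the polynomial ring in the variables in `s`. -/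
def freeSpan (R : Type*) [CommRing R] (s : Set σ) (L : Set (σ →₀ ℕ)) :
    Submodule R (MvPolynomial σ R) :=
  restrictSupport R {m | m.filter (· ∉ s) ∈ L}

open Classical in
theorem mem_freeSpan_iff {f : MvPolynomial σ R} :
    f ∈ freeSpan R s L ↔ ∀ m ∈ f.support, m.filter (· ∉ s) ∈ L :=
  mem_restrictSupport_iff R

theorem mul_mem_freeSpan {f g : MvPolynomial σ R} (hg : g ∈ supported R s)
    (hf : f ∈ freeSpan R s L) : g * f ∈ freeSpan R s L := by
  classical
  rw [mem_freeSpan_iff] at hf ⊢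
  intro m hm
  obtain ⟨a, ha, b, hb, rfl⟩ := Finset.mem_add.1 (support_mul g f hm)
  have ha0 : a.filter (· ∉ s) = 0 := by
    rw [Finsupp.filter_eq_zero_iff]
    intro i hi
    by_contra hai
    exact hi (mem_supported.1 hg
      ((mem_vars_iff_mem_support i).2 ⟨a, ha, Finsupp.mem_support_iff.2 hai⟩))
  rw [Finsupp.filter_add, ha0, zero_add]
  exact hf b hb

theorem homogeneousComponent_mem_freeSpan {f : MvPolynomial σ R} (d : ℕ)
    (hf : f ∈ freeSpan R s L) : homogeneousComponent d f ∈ freeSpan R s L := by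
  rw [mem_freeSpan_iff] at hf ⊢
  intro m hm
  refine hf m (mem_support_iff.2 fun h0 => mem_support_iff.1 hm ?_)
  rw [coeff_homogeneousComponent, h0, ite_self]

theorem X_mem_supported_of_mem {i : σ} (hi : i ∈ s) : (X i : MvPolynomial σ R) ∈ supported R s :=
  Algebra.subset_adjoin ⟨i, hi, rfl⟩

theorem span_X_le_of_freeSpan_sup_eq_top {I : Ideal (MvPolynomial σ R)} {t : Set σ} (hts : t ⊆ s)
    (h : freeSpan R s L ⊔ I.restrictScalars R = ⊤) :
    (Ideal.span (X '' t)).restrictScalars R ≤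
      freeSpan R s L ⊓ (Ideal.span (X '' t)).restrictScalars R ⊔ I.restrictScalars R := by
  intro f hf
  induction hf using Submodule.closure_induction with
  | zero => exact Submodule.zero_mem _
  | add f g _ _ hf hg => exact Submodule.add_mem _ hf hg
  | smul_mem g x hx =>
    obtain ⟨i, hi, rfl⟩ := hx
    obtain ⟨v, hv, w, hw, rfl⟩ := Submodule.mem_sup.1 (h.ge (Submodule.mem_top (x := g)))
    rw [smul_eq_mul, mul_comm, mul_add]
    refine Submodule.add_mem_sup ⟨mul_mem_freeSpan (X_mem_supported_of_mem (hts hi)) hv, ?_⟩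
      (I.mul_mem_left _ hw)
    exact Ideal.mul_mem_right _ _ (Ideal.subset_span ⟨i, hi, rfl⟩)

theorem isPermRegular_of_isCompl_freeSpan {I : Ideal (MvPolynomial σ R)}
    (h : IsCompl (freeSpan R s L) (I.restrictScalars R)) : IsPermRegular X s I := by
  intro t hts i ⟨his, hit⟩
  rw [smul_eq_mul, Ideal.mul_top, isSMulRegular_quotient_iff_mem_of_smul_mem]
  intro f hf
  obtain ⟨v, hv, w, hw, rfl⟩ := Submodule.mem_sup.1 (h.sup_eq_top.ge (Submodule.mem_top (x := f)))
  obtain ⟨a, ha, b, hb, hab⟩ := Submodule.mem_sup.1 hf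
  obtain ⟨c, ⟨hcL, hct⟩, g, hg, rfl⟩ :=
    Submodule.mem_sup.1 (span_X_le_of_freeSpan_sup_eq_top hts h.sup_eq_top hb)
  rw [smul_eq_mul, mul_add] at hab
  have hXv : X i * v - c ∈ freeSpan R s L ⊓ I.restrictScalars R := by
    refine ⟨sub_mem (mul_mem_freeSpan (X_mem_supported_of_mem his) hv) hcL, ?_⟩
    have hXvI : X i * v - c = a + g - X i * w := by linear_combination -hab
    rw [hXvI]
    exact sub_mem (I.add_mem ha hg) (I.mul_mem_left _ hw)
  rw [h.inf_eq_bot, Submodule.mem_bot, sub_eq_zero] at hXv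
  have hX := isPermRegular_X σ R s t hts i ⟨his, hit⟩
  rw [bot_sup_eq, smul_eq_mul, Ideal.mul_top, isSMulRegular_quotient_iff_mem_of_smul_mem] at hX
  exact add_mem (Ideal.mem_sup_right (hX v (hXv.symm ▸ hct :))) (Ideal.mem_sup_left hw)

attribute [local instance] MvPolynomial.gradedAlgebra in
theorem homogeneousComponent_succ_X_mul (i : σ) (d : ℕ) (f : MvPolynomial σ R) :
    homogeneousComponent (d + 1) (X i * f) = X i * homogeneousComponent d f := by
  have h := DirectSum.coe_decompose_mul_add_of_left_mem (homogeneousSubmodule σ R) (j := d) (b := f)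
    (isHomogeneous_X R i)
  rw [add_comm] at h
  exact (decomposition.decompose'_apply _ _).symm.trans
    (h.trans (congrArg _ (decomposition.decompose'_apply _ _)))

/- Graded Nakayama: argue by induction on the degree. -/
theorem eq_top_of_sup_span_X_eq_top {W : Submodule R (MvPolynomial σ R)}
    (hgr : ∀ f ∈ W, ∀ d, homogeneousComponent d f ∈ W)
    (hmul : ∀ i ∈ s, ∀ f ∈ W, X i * f ∈ W)
    (h : W ⊔ (Ideal.span (X '' s)).restrictScalars R = ⊤) : W = ⊤ := by
  have key (d : ℕ) (f : MvPolynomial σ R) : homogeneousComponent d f ∈ W := by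
    induction d using Nat.strong_induction_on generalizing f with
    | _ d ih =>
    obtain ⟨v, hv, w, hw, rfl⟩ := Submodule.mem_sup.1 (h.ge (Submodule.mem_top (x := f)))
    rw [map_add]
    refine W.add_mem (hgr v hv d) ?_
    induction hw using Submodule.closure_induction with
    | zero => simp
    | add f g _ _ hf hg => rw [map_add]; exact W.add_mem hf hg
    | smul_mem g x hx =>
      obtain ⟨i, hi, rfl⟩ := hx
      rw [smul_eq_mul, mul_comm]
      cases d with
      | zero =>
        classical
        rw [homogeneousComponent_zero, coeff_X_mul', if_neg (by simp), C_0]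
        exact W.zero_mem
      | succ d =>
        rw [homogeneousComponent_succ_X_mul]
        exact hmul i hi _ (ih d d.lt_succ_self g)
  rw [eq_top_iff]
  intro f _
  rw [← sum_homogeneousComponent f]
  exact W.sum_mem fun d _ => key d f

end FreeSpan

section ExistsFreeSpan

variable {k : Type*} [Field k] {σ : Type*}

open Classical in
theorem exists_finset_freeSpan_sup_eq_top_of_X_mem {J : Ideal (MvPolynomial σ k)} {s : Set σ}
    (hX : ∀ i ∈ s, X i ∈ J) [Module.Finite k (MvPolynomial σ k ⧸ J)] :
    ∃ L : Finset (σ →₀ ℕ), L.card ≤ Module.finrank k (MvPolynomial σ k ⧸ J) ∧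
      freeSpan k s (L : Set (σ →₀ ℕ)) ⊔ J.restrictScalars k = ⊤ := by
  let t : Set (σ →₀ ℕ) := {m | m.filter (· ∉ s) = m}
  let π := Ideal.Quotient.mkₐ k J
  let v (m : σ →₀ ℕ) : MvPolynomial σ k ⧸ J := π (monomial m 1)
  obtain ⟨b, hbt, -, hspan, hli⟩ :=
    exists_linearIndepOn_extension (linearIndepOn_empty k v) (Set.empty_subset t)
  have hfin : b.Finite := hli.linearIndependent.finite
  lift b to Finset (σ →₀ ℕ) using hfin
  refine ⟨b, by simpa using hli.linearIndependent.fintype_card_le_finrank, ?_⟩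
  have hb : restrictSupport k (b : Set (σ →₀ ℕ)) ≤ freeSpan k s b :=
    restrictSupport_mono k fun m hm => show m.filter (· ∉ s) ∈ _ from (hbt hm).symm ▸ hm
  rw [eq_top_iff, ← restrictSupport_univ, restrictSupport_eq_span, Submodule.span_le]
  rintro _ ⟨m, -, rfl⟩
  by_cases hm : m ∈ t
  · have hvm := hspan ⟨m, hm, rfl⟩
    rw [show v = π.toLinearMap ∘ (monomial · 1) from rfl, Set.image_comp, Submodule.span_image,
      ← restrictSupport_eq_span, SetLike.mem_coe, Function.comp_apply, ← Submodule.mem_comap,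
      Submodule.comap_map_eq] at hvm
    exact sup_le_sup hb (fun f hf => Ideal.Quotient.eq_zero_iff_mem.1 hf) hvm
  · refine Submodule.mem_sup_right ?_
    obtain ⟨i, hi⟩ := Finsupp.ne_iff.1 hm
    rw [Finsupp.filter_apply, ite_not, ite_ne_right_iff] at hi
    exact J.mem_of_dvd (X_dvd_monomial.2 (Or.inr hi.2.symm)) (hX i hi.1)

end ExistsFreeSpan

theorem IdealHomog.exists_finset_freeSpan_sup_eq_top {k : Type} [Field k] {N : ℕ}
    {I : Ideal (MvPolynomial (Fin N) k)} (hI : IdealHomog k I) (s : Set (Fin N))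
    [Module.Finite k (MvPolynomial (Fin N) k ⧸ (I ⊔ Ideal.span (X '' s)))] :
    ∃ L : Finset (Fin N →₀ ℕ),
      L.card ≤ Module.finrank k (MvPolynomial (Fin N) k ⧸ (I ⊔ Ideal.span (X '' s))) ∧
      freeSpan k s (L : Set (Fin N →₀ ℕ)) ⊔ I.restrictScalars k = ⊤ := by
  obtain ⟨L, hcard, htop⟩ := exists_finset_freeSpan_sup_eq_top_of_X_mem (s := s)
    (J := I ⊔ Ideal.span (X '' s))
    fun i hi => Ideal.mem_sup_right (Ideal.subset_span ⟨i, hi, rfl⟩)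
  refine ⟨L, hcard, eq_top_of_sup_span_X_eq_top (s := s) ?_ ?_ ?_⟩
  · intro f hf d
    obtain ⟨v, hv, w, hw, rfl⟩ := Submodule.mem_sup.1 hf
    rw [map_add]
    exact Submodule.add_mem_sup (homogeneousComponent_mem_freeSpan d hv) (hI w hw d)
  · intro i hi f hf
    obtain ⟨v, hv, w, hw, rfl⟩ := Submodule.mem_sup.1 hf
    rw [mul_add]
    exact Submodule.add_mem_sup (mul_mem_freeSpan (X_mem_supported_of_mem hi) hv)
      (I.mul_mem_left _ hw)
  · rwa [sup_assoc, ← Submodule.restrictScalars_sup]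

section Counting

variable {k : Type} [Field k]

theorem finrank_restrictSupport {σ : Type*} (k : Type*) [Field k] (T : Finset (σ →₀ ℕ)) :
    Module.finrank k (restrictSupport k (T : Set (σ →₀ ℕ))) = T.card := by
  rw [Module.finrank_eq_card_basis (basisRestrictSupport k (T : Set (σ →₀ ℕ)))]
  simp

open Classical in
theorem finrank_freeSpan_inf_le {σ : Type*} {n : ℕ} {s : Finset σ}
    (hs : s.card = n + 1) (L : Finset (σ →₀ ℕ)) (d : ℕ) :
    Module.finrank k (freeSpan k (s : Set σ) (L : Set (σ →₀ ℕ)) ⊓ homogeneousSubmodule σ k d :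
      Submodule k (MvPolynomial σ k)) ≤ L.card * (n + d).choose n := by
  let T : Finset (σ →₀ ℕ) :=
    L.biUnion fun l => (s.finsuppAntidiag (d - l.degree)).image fun m => l + m
  have hle : freeSpan k (s : Set σ) (L : Set (σ →₀ ℕ)) ⊓ homogeneousSubmodule σ k d ≤
      restrictSupport k (T : Set (σ →₀ ℕ)) := by
    rintro f ⟨hf, hd⟩
    rw [mem_restrictSupport_iff]
    intro m hm
    have hsplit : m.filter (· ∉ s) + m.filter (· ∈ s) = m := by
      rw [add_comm]
      exact Finsupp.filter_add_filter_not _ _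
    have hdeg : m.degree = d :=
      not_imp_comm.1 (IsHomogeneous.coeff_eq_zero hd) (mem_support_iff.1 hm)
    refine Finset.mem_biUnion.2 ⟨m.filter (· ∉ s), by simpa using mem_freeSpan_iff.1 hf m hm,
      Finset.mem_image.2 ⟨m.filter (· ∈ s), Finset.mem_finsuppAntidiag'.2 ⟨?_, ?_⟩, hsplit⟩⟩
    · change (m.filter (· ∈ s)).degree = _
      rw [← hdeg, ← congrArg Finsupp.degree hsplit, map_add, add_tsub_cancel_left]
    · intro i hi
      simpa using (Finset.mem_filter.1 hi).2
  have hfin : Module.Finite k (restrictSupport k (T : Set (σ →₀ ℕ))) :=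
    .of_basis (basisRestrictSupport k _)
  refine (Submodule.finrank_mono hle).trans ((finrank_restrictSupport k T).trans_le ?_)
  refine Finset.card_biUnion_le_card_mul _ _ _ fun l _ => Finset.card_image_le.trans ?_
  rw [Finset.card_finsuppAntidiag_nat_eq_choose, hs, add_right_comm, Nat.add_sub_cancel,
    ← Nat.choose_symm_add]
  exact Nat.choose_le_choose n (by omega)

variable {N : ℕ} {I : Ideal (MvPolynomial (Fin N) k)}

theorem IdealHomog.map_freeSpan_inf_eq_quotComponent (hI : IdealHomog k I) {s : Set (Fin N)}
    {L : Set (Fin N →₀ ℕ)} (htop : freeSpan k s L ⊔ I.restrictScalars k = ⊤) (d : ℕ) :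
    (freeSpan k s L ⊓ homogeneousSubmodule (Fin N) k d).map (Ideal.Quotient.mkₐ k I).toLinearMap =
      quotComponent k I d := by
  refine le_antisymm (Submodule.map_mono inf_le_right) ?_
  rintro _ ⟨f, hf, rfl⟩
  obtain ⟨v, hv, w, hw, hvw⟩ := Submodule.mem_sup.1 (htop.ge (Submodule.mem_top (x := f)))
  refine ⟨homogeneousComponent d v, ⟨homogeneousComponent_mem_freeSpan d hv,
    homogeneousComponent_isHomogeneous d v⟩, Ideal.Quotient.eq.2 ?_⟩
  have hdiff : homogeneousComponent d v - f = -homogeneousComponent d w := by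
    rw [← homogeneousComponent_eq_self hf, ← hvw, map_add]
    ring
  rw [hdiff]
  exact I.neg_mem (hI w hw d)

open Classical in
theorem choose_le_finrank_freeSpan_inf_ker {n : ℕ} {s : Finset (Fin N)} (hs : s.card = n + 1)
    {L : Set (Fin N →₀ ℕ)} {v : MvPolynomial (Fin N) k} (hv : v ∈ freeSpan k s L) (hvI : v ∈ I)
    (hv0 : v ≠ 0) {c d : ℕ} (hvc : v.IsHomogeneous c) (hcd : c ≤ d) :
    (n + (d - c)).choose n ≤
      Module.finrank k (freeSpan k s L ⊓ homogeneousSubmodule (Fin N) k d ⊓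
        LinearMap.ker (Ideal.Quotient.mkₐ k I).toLinearMap :
        Submodule k (MvPolynomial (Fin N) k)) := by
  let T := s.finsuppAntidiag (d - c)
  have hT : T.card = (n + (d - c)).choose n := by
    rw [Finset.card_finsuppAntidiag_nat_eq_choose, hs, add_right_comm, Nat.add_sub_cancel,
      ← Nat.choose_symm_add]
  have hle : (restrictSupport k (T : Set (Fin N →₀ ℕ))).map (LinearMap.mulLeft k v) ≤
      freeSpan k s L ⊓ homogeneousSubmodule (Fin N) k d ⊓
        LinearMap.ker (Ideal.Quotient.mkₐ k I).toLinearMap := by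
    rintro _ ⟨g, hg, rfl⟩
    have hgT (m) (hm : m ∈ g.support) : m.degree = d - c ∧ m.support ⊆ s :=
      Finset.mem_finsuppAntidiag'.1 ((mem_restrictSupport_iff k).1 hg hm)
    refine ⟨⟨?_, ?_⟩, Ideal.Quotient.eq_zero_iff_mem.2 (I.mul_mem_right g hvI)⟩
    · rw [LinearMap.mulLeft_apply, mul_comm]
      refine mul_mem_freeSpan (mem_supported.2 fun i hi => ?_) hv
      obtain ⟨m, hm, him⟩ := (mem_vars_iff_mem_support i).1 hi
      exact (hgT m hm).2 him
    · have hgd : g.IsHomogeneous (d - c) := fun m hm => by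
        rw [← (hgT m (mem_support_iff.2 hm)).1, Finsupp.degree_eq_weight_one]
        rfl
      simpa [hcd] using hvc.mul hgd
  have hfin : Module.Finite k (freeSpan k s L ⊓ homogeneousSubmodule (Fin N) k d ⊓
      LinearMap.ker (Ideal.Quotient.mkₐ k I).toLinearMap :
      Submodule k (MvPolynomial (Fin N) k)) :=
    Submodule.finiteDimensional_of_le (inf_le_left.trans inf_le_right)
  rw [← hT, ← finrank_restrictSupport k,
    (Submodule.equivMapOfInjective (LinearMap.mulLeft k v) (mul_right_injective₀ hv0) _).finrank_eq]
  exact Submodule.finrank_mono hle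

theorem IdealHomog.hilbFn_add_choose_le (hI : IdealHomog k I) {n : ℕ} {s : Finset (Fin N)}
    (hs : s.card = n + 1) {L : Finset (Fin N →₀ ℕ)}
    (htop : freeSpan k (s : Set (Fin N)) L ⊔ I.restrictScalars k = ⊤) {v : MvPolynomial (Fin N) k}
    (hv : v ∈ freeSpan k s (L : Set (Fin N →₀ ℕ))) (hvI : v ∈ I) (hv0 : v ≠ 0) {c d : ℕ}
    (hvc : v.IsHomogeneous c) (hcd : c ≤ d) :
    hilbFn k I d + (n + (d - c)).choose n ≤ L.card * (n + d).choose n := by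
  have hfin : Module.Finite k (freeSpan k s L ⊓ homogeneousSubmodule (Fin N) k d :
      Submodule k (MvPolynomial (Fin N) k)) := Submodule.finiteDimensional_of_le inf_le_right
  have hrank := finrank_map_add_finrank_inf_ker (Ideal.Quotient.mkₐ k I).toLinearMap
    (freeSpan k s L ⊓ homogeneousSubmodule (Fin N) k d)
  rw [hI.map_freeSpan_inf_eq_quotComponent htop] at hrank
  calc hilbFn k I d + (n + (d - c)).choose n
    _ ≤ hilbFn k I d + _ :=
      add_le_add_right (choose_le_finrank_freeSpan_inf_ker hs hv hvI hv0 hvc hcd) _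
    _ = _ := hrank
    _ ≤ L.card * (n + d).choose n := finrank_freeSpan_inf_le hs L d

end Counting

section Numeric

theorem coeff_nonneg_of_eventually_eval_nonneg {P : Polynomial ℚ} {n : ℕ} (hdeg : P.natDegree ≤ n)
    (hnonneg : ∀ᶠ d : ℕ in Filter.atTop, 0 ≤ P.eval (d : ℚ)) : 0 ≤ P.coeff n := by
  by_contra! hneg
  have hnat : P.natDegree = n := hdeg.antisymm (Polynomial.le_natDegree_of_ne_zero hneg.ne)
  obtain rfl | hn := n.eq_zero_or_pos
  · obtain ⟨d, hd⟩ := hnonneg.exists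
    rw [Polynomial.eq_C_of_natDegree_eq_zero hnat, Polynomial.eval_C] at hd
    exact hneg.not_ge hd
  · have hlim := P.tendsto_atBot_of_leadingCoeff_nonpos
      (Polynomial.natDegree_pos_iff_degree_pos.1 (hnat ▸ hn))
      (by rw [Polynomial.leadingCoeff, hnat]; exact hneg.le)
    obtain ⟨d, hd, hd0⟩ := ((hlim.comp tendsto_natCast_atTop_atTop).eventually
      (Filter.eventually_lt_atBot 0)).and hnonneg |>.exists
    exact hd.not_ge hd0

theorem HasDeg.not_forall_add_choose_le {k : Type} [Field k] {N : ℕ}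
    {I : Ideal (MvPolynomial (Fin N) k)} {n D : ℕ} (h : HasDeg k I n D) (c : ℕ) :
    ¬ ∀ d ≥ c, hilbFn k I d + (n + (d - c)).choose n ≤ D * (n + d).choose n := by
  intro hle
  obtain ⟨P, hP, hD, hF⟩ := h
  let Q : Polynomial ℚ := Polynomial.C (D : ℚ) * Polynomial.preHilbertPoly ℚ n 0 -
    Polynomial.preHilbertPoly ℚ n c - P
  have hdeg : Q.natDegree ≤ n := by
    refine (Polynomial.natDegree_sub_le _ _).trans (max_le ?_ hP.le)
    refine (Polynomial.natDegree_sub_le _ _).trans (max_le ?_ ?_)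
    · exact (Polynomial.natDegree_C_mul_le _ _).trans (Polynomial.natDegree_preHilbertPoly ..).le
    · exact (Polynomial.natDegree_preHilbertPoly ..).le
  have hnonneg : ∀ᶠ d : ℕ in Filter.atTop, 0 ≤ Q.eval (d : ℚ) := by
    filter_upwards [hF, Filter.eventually_ge_atTop c] with d hd hcd
    have hcast : (hilbFn k I d : ℚ) + (n + (d - c)).choose n ≤ D * (n + d).choose n :=
      mod_cast hle d hcd
    simp only [Q, Polynomial.eval_sub, Polynomial.eval_mul, Polynomial.eval_C, ← hd,
      Polynomial.preHilbertPoly_eq_choose_sub_add ℚ n (Nat.zero_le d),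
      Polynomial.preHilbertPoly_eq_choose_sub_add ℚ n hcd, Nat.sub_zero, add_comm _ n]
    linarith
  have hcoeff : Q.coeff n = -(n.factorial : ℚ)⁻¹ := by
    have hfac : (n.factorial : ℚ) ≠ 0 := mod_cast n.factorial_ne_zero
    simp only [Q, Polynomial.coeff_sub, Polynomial.coeff_C_mul,
      Polynomial.coeff_preHilbertPoly_self, hD, Polynomial.leadingCoeff, hP]
    field_simp
    ring
  have hcontra := coeff_nonneg_of_eventually_eval_nonneg hdeg hnonneg
  have hfac : (0 : ℚ) < n.factorial := mod_cast n.factorial_pos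
  rw [hcoeff, neg_nonneg, inv_nonpos] at hcontra
  exact hfac.not_ge hcontra

end Numeric

/- A relation `f` among the generators of `S / I` over the polynomials in the variables in `s` would
make the Hilbert function grow too slowly for the given degree. -/
theorem HasDeg.disjoint_freeSpan {k : Type} [Field k] {N n D : ℕ}
    {I : Ideal (MvPolynomial (Fin N) k)} (hdeg : HasDeg k I n D) (hI : IdealHomog k I)
    {s : Finset (Fin N)} (hs : s.card = n + 1) {L : Finset (Fin N →₀ ℕ)} (hL : L.card ≤ D)
    (htop : freeSpan k (s : Set (Fin N)) (L : Set (Fin N →₀ ℕ)) ⊔ I.restrictScalars k = ⊤) :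
    Disjoint (freeSpan k (s : Set (Fin N)) (L : Set (Fin N →₀ ℕ))) (I.restrictScalars k) := by
  rw [Submodule.disjoint_def]
  intro f hf hfI
  by_contra hf0
  obtain ⟨c, hc⟩ : ∃ c, homogeneousComponent c f ≠ 0 := by
    by_contra! h
    exact hf0 ((sum_homogeneousComponent f).symm.trans (Finset.sum_eq_zero fun c _ => h c))
  refine hdeg.not_forall_add_choose_le c fun d hd => ?_
  exact (hI.hilbFn_add_choose_le hs htop (homogeneousComponent_mem_freeSpan c hf) (hI f hfI c) hc
    (homogeneousComponent_isHomogeneous c f) hd).trans (Nat.mul_le_mul_right _ hL)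

theorem HasDeg.isPermRegular {k : Type} [Field k] {N n : ℕ} {I : Ideal (MvPolynomial (Fin N) k)}
    (hI : IdealHomog k I) {s : Finset (Fin N)} (hs : s.card = n + 1)
    [Module.Finite k (MvPolynomial (Fin N) k ⧸ (I ⊔ Ideal.span (X '' (s : Set (Fin N)))))]
    (hdeg : HasDeg k I n (Module.finrank k
      (MvPolynomial (Fin N) k ⧸ (I ⊔ Ideal.span (X '' (s : Set (Fin N))))))) :
    IsPermRegular X (s : Set (Fin N)) I := by
  obtain ⟨L, hL, htop⟩ := hI.exists_finset_freeSpan_sup_eq_top s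
  have h : IsCompl (freeSpan k (s : Set (Fin N)) L) (I.restrictScalars k) :=
    ⟨hdeg.disjoint_freeSpan hI hs hL htop, codisjoint_iff.2 htop⟩
  exact isPermRegular_of_isCompl_freeSpan h

section LinearResolution

theorem HomogOfDeg.mem_pow_idealOfVars {σ k : Type} [Field k] {f : MvPolynomial σ k} {d : ℤ}
    (hf : HomogOfDeg k f d) {n : ℕ} (hn : (n : ℤ) ≤ d) : f ∈ idealOfVars σ k ^ n :=
  (mem_pow_idealOfVars_iff' n f).2 fun _ hm => by
    by_contra h0
    have := hf.degree_eq h0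
    omega

/- The regularity of `I` is read off from the exact sequence `0 → I → S → S / I → 0`. -/
theorem isRegularAbove_ideal {σ k : Type} [Field k] {I : Ideal (MvPolynomial σ k)}
    (hI : IsGradedSubmodule (intComponent σ k) I) {r : ℕ} {l l' : List σ}
    (hreg : IsPermRegular X {i | i ∈ l} I)
    (hr : idealOfVars σ k ^ (r + 1) ≤ I ⊔ Ideal.span (X '' {i | i ∈ l})) (hl : (l ++ l').Nodup)
    (hall : ∀ i, i ∈ l ++ l') :
    IsRegularAbove X (intComponent σ k) (r + 1) I (l ++ l') ⊥ := by
  have hS : IsRegularAbove (X : σ → MvPolynomial σ k) (intComponent σ k) (r + 1)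
      (⊤ : Ideal (MvPolynomial σ k)) (l ++ l') (⊥ : Ideal (MvPolynomial σ k)) := by
    rw [← (l ++ l').append_nil]
    refine (isPermRegular_X σ k _).isRegularAbove_append hl (fun d hd f hf => ?_) []
    have huniv : {i | i ∈ l ++ l'} = Set.univ := Set.eq_univ_of_forall hall
    rw [bot_sup_eq, smul_eq_mul, Ideal.mul_top, huniv, Set.image_univ]
    exact (homogOfDeg_iff_intComponent_eq.2 hf).mem_idealOfVars (by omega)
  have hR : IsRegularAbove X (intComponent σ k) r (⊤ : Ideal (MvPolynomial σ k)) (l ++ l') I := by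
    refine hreg.isRegularAbove_append (List.Nodup.of_append_left hl) (fun d hd f hf => ?_) l'
    rw [smul_eq_mul, Ideal.mul_top]
    exact hr ((homogOfDeg_iff_intComponent_eq.2 hf).mem_pow_idealOfVars (by omega))
  refine .of_exact (f := LinearMap.id) (QV := I) (isDegreeProj_intComponent homogOfDeg_X)
    (fun _ _ => rfl) hI .bot le_rfl ?_ (fun _ _ _ _ _ h => h) hS (by rwa [LinearMap.range_id])
  rw [sup_bot_eq, Submodule.comap_id]

variable {k : Type} [Field k] {N r : ℕ} {I : Ideal (MvPolynomial (Fin N) k)}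

theorem truncIdeal_le (I : Ideal (MvPolynomial (Fin N) k)) (r : ℕ) :
    truncIdeal k I r ≤ I ⊓ idealOfVars (Fin N) k ^ (r + 1) :=
  Ideal.span_le.2 fun _ ⟨hfI, _, hd, hf⟩ => ⟨hfI, mem_pow_idealOfVars_of_isHomogeneous hf hd⟩

theorem MinGradedFreeRes.eq_of_β_truncIdeal_ne_zero (hI : IdealHomog k I) {l : List (Fin N)}
    (hl : l.Nodup) (hall : ∀ i, i ∈ l)
    (hreg : IsRegularAbove X (intComponent (Fin N) k) (r + 1) I l ⊥)
    (res : MinGradedFreeRes k (Fin N) (truncIdeal k I r) (idealDeg k (truncIdeal k I r)))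
    {i : ℕ} {j : ℤ} (hij : res.β i j ≠ 0) : j = r + 1 := by
  refine res.linear_of_isRegularAbove hl hall ?_ (fun f hf d hd hfd => ?_) hij
  · refine .of_truncation (isDegreeProj_intComponent homogOfDeg_X)
      ((truncIdeal_le I r).trans inf_le_left) hI.isGradedSubmodule (fun d hd f hf hfd => ?_)
      .bot le_rfl (fun _ _ _ _ _ h => h) hreg
    obtain rfl | ⟨m, rfl, hfm⟩ := homogOfDeg_iff_intComponent_eq.2 hfd
    · exact zero_mem _
    · exact Ideal.subset_span ⟨hf, m, by omega, hfm⟩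
  · ext m
    by_contra hm
    have hdeg := hfd.degree_eq hm
    exact hm ((mem_pow_idealOfVars_iff' _ f).1 ((truncIdeal_le I r).trans inf_le_right hf) m
      (by omega))

end LinearResolution

section CohenMacaulay

open RingTheory.Sequence

variable {k : Type} [Field k] {N c : ℕ} {I : Ideal (MvPolynomial (Fin N) k)}

theorem irrelevantIdeal_eq_map :
    irrelevantIdeal k I = (idealOfVars (Fin N) k).map (Ideal.Quotient.mk I) := by
  rw [idealOfVars, Ideal.map_span, ← Set.range_comp]
  rfl

theorem isRegular_map_quotient_mk_iff {A : Type*} [CommRing A] {I : Ideal A} {l : List A} :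
    IsRegular (A ⧸ I) (l.map (Ideal.Quotient.mk I)) ↔ IsRegular (A ⧸ I) l :=
  (AddEquiv.isRegular_congr (e := AddEquiv.refl (A ⧸ I)) (as := l)
    (bs := l.map (Ideal.Quotient.mk I)) (List.forall₂_map_right_iff.2
      (List.forall₂_same.2 fun _ _ _ => rfl))).symm

theorem isCMQuot_iff : IsCMQuot k I c ↔ ∃ l : List (MvPolynomial (Fin N) k), l.length = c ∧
    (∀ z ∈ l, z ∈ idealOfVars (Fin N) k) ∧ IsRegular (MvPolynomial (Fin N) k ⧸ I) l := by
  constructor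
  · rintro ⟨rs, hlen, hmem, hreg⟩
    simp only [irrelevantIdeal_eq_map,
      Ideal.mem_map_iff_of_surjective _ Ideal.Quotient.mk_surjective] at hmem
    choose! lift hlift hmk using hmem
    have hrs : (rs.map lift).map (Ideal.Quotient.mk I) = rs := by
      rw [List.map_map]
      exact (List.map_congr_left hmk).trans (List.map_id _)
    exact ⟨rs.map lift, by simpa, by simpa, isRegular_map_quotient_mk_iff.1 (hrs.symm ▸ hreg)⟩
  · rintro ⟨l, hlen, hmem, hreg⟩
    refine ⟨l.map (Ideal.Quotient.mk I), by simpa, ?_, isRegular_map_quotient_mk_iff.2 hreg⟩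
    rw [irrelevantIdeal_eq_map]
    exact List.forall_mem_map.2 fun z hz => Ideal.mem_map_of_mem _ (hmem z hz)

theorem smul_top_quotient_eq_top_iff {A : Type*} [CommRing A] {I J : Ideal A} :
    J • (⊤ : Submodule A (A ⧸ I)) = ⊤ ↔ I ⊔ J = ⊤ := by
  rw [Ideal.smul_top_eq_map, Submodule.restrictScalars_eq_top_iff, Ideal.Quotient.algebraMap_eq,
    ← Ideal.comap_eq_top_iff (f := Ideal.Quotient.mk I),
    Ideal.comap_map_of_surjective' _ Ideal.Quotient.mk_surjective, Ideal.mk_ker, sup_comm]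

theorem isRegular_quotient_iff {A : Type*} [CommRing A] {I : Ideal A} {l : List A} :
    IsRegular (A ⧸ I) l ↔ IsWeaklyRegular (A ⧸ I) l ∧ I ⊔ Ideal.ofList l ≠ ⊤ := by
  rw [RingTheory.Sequence.isRegular_iff, ne_comm, Ne, smul_top_quotient_eq_top_iff]

theorem IdealHomog.le_idealOfVars (hI : IdealHomog k I) (hne : I ≠ ⊤) :
    I ≤ idealOfVars (Fin N) k := by
  intro f hf
  rw [mem_idealOfVars_iff]
  by_contra h0
  have hC := hI f hf 0
  rw [homogeneousComponent_zero] at hC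
  exact hne (I.eq_top_of_isUnit_mem hC ((isUnit_iff_ne_zero.2 h0).map C))

theorem tailIdeal_le_idealOfVars (e : ℕ) : tailIdeal k N e ≤ idealOfVars (Fin N) k :=
  Ideal.span_mono (Set.image_subset_range _ _)

theorem sup_tailIdeal_ne_top (hI : IdealHomog k I) (hne : I ≠ ⊤) (e : ℕ) :
    I ⊔ tailIdeal k N e ≠ ⊤ :=
  ne_top_of_le_ne_top idealOfVars_ne_top
    (sup_le (hI.le_idealOfVars hne) (tailIdeal_le_idealOfVars e))

end CohenMacaulay

section OneLess

/-- `F` agrees with `G` below `r` and falls short of it by one at `r`: the relation between the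
Hilbert functions of `S / I` and of `S` when `r` is the initial degree of `I` and
`dim I_r = 1`. -/
def IsOneLessAt (F G : ℕ → ℕ) (r : ℕ) : Prop := (∀ d < r, F d = G d) ∧ F r + 1 = G r

variable {F G : ℕ → ℕ} {r : ℕ}

theorem isOneLessAt_iff_of_forall_lt (h : ∀ d < r, F d = G d) :
    IsOneLessAt F G r ↔ partialSum F r + 1 = partialSum G r := by
  rw [IsOneLessAt, and_iff_right h, partialSum, partialSum, Finset.sum_range_succ,
    Finset.sum_range_succ, Finset.sum_congr rfl fun d hd => h d (Finset.mem_range.1 hd), add_assoc,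
    add_right_inj]

theorem partialSum_eq_iff_forall_lt :
    (∀ d < r, partialSum F d = partialSum G d) ↔ ∀ d < r, F d = G d := by
  induction r with
  | zero => simp
  | succ r ih =>
    rw [Nat.forall_lt_succ_right, Nat.forall_lt_succ_right, ih]
    refine and_congr_right fun h => ?_
    rw [partialSum, partialSum, Finset.sum_range_succ, Finset.sum_range_succ,
      Finset.sum_congr rfl fun d hd => h d (Finset.mem_range.1 hd), add_right_inj]

theorem isOneLessAt_partialSum_iff :
    IsOneLessAt (partialSum F) (partialSum G) r ↔ IsOneLessAt F G r := by
  rw [IsOneLessAt, partialSum_eq_iff_forall_lt]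
  exact ⟨fun ⟨hlt, hr⟩ => (isOneLessAt_iff_of_forall_lt hlt).2 hr,
    fun h => ⟨h.1, (isOneLessAt_iff_of_forall_lt h.1).1 h⟩⟩

theorem isOneLessAt_iterate_partialSum_iff (c : ℕ) :
    IsOneLessAt (partialSum^[c] F) (partialSum^[c] G) r ↔ IsOneLessAt F G r := by
  induction c with
  | zero => rfl
  | succ c ih =>
    rw [Function.iterate_succ_apply', Function.iterate_succ_apply', isOneLessAt_partialSum_iff, ih]

/- A discrepancy below `r` would persist up to `r`, making the partial sums differ by at
least two. -/
theorem isOneLessAt_iff_partialSum (hle : ∀ d, F d ≤ G d)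
    (hstep : ∀ d, F d < G d → F (d + 1) < G (d + 1)) :
    IsOneLessAt F G r ↔ partialSum F r + 1 = partialSum G r := by
  refine ⟨fun h => (isOneLessAt_iff_of_forall_lt h.1).1 h, fun hr => ?_⟩
  refine (isOneLessAt_iff_of_forall_lt fun d hd => ?_).2 hr
  by_contra hne
  have hlt : F d < G d := (hle d).lt_of_ne hne
  have hltr : F r < G r := Nat.le_induction hlt (fun j _ => hstep j) r hd.le
  have hsum : ∑ j ∈ Finset.range r, F j < ∑ j ∈ Finset.range r, G j :=
    Finset.sum_lt_sum (fun j _ => hle j) ⟨d, Finset.mem_range.2 hd, hlt⟩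
  rw [partialSum, partialSum, Finset.sum_range_succ, Finset.sum_range_succ] at hr
  omega

end OneLess

section HilbertFunction

variable {k : Type} [Field k] {N e r : ℕ} {I : Ideal (MvPolynomial (Fin N) k)}

theorem homogeneousPart_bot (d : ℕ) :
    homogeneousPart (⊥ : Ideal (MvPolynomial (Fin N) k)) d = ⊥ :=
  eq_bot_iff.2 fun _ hf => hf.2

theorem homogeneousPart_eq_bot_of_lt (hN : 2 ≤ N)
    (hr : Module.finrank k (homogeneousPart I r) = 1) {d : ℕ} (hd : d < r) :
    homogeneousPart I d = ⊥ := by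
  obtain ⟨N, rfl⟩ := Nat.exists_eq_add_of_le' hN
  obtain ⟨s, rfl⟩ := Nat.exists_eq_add_of_lt hd
  rw [eq_bot_iff]
  intro f hf
  by_contra hf0
  set g : MvPolynomial (Fin (N + 2)) k := X 0 ^ s * f
  have hg0 : g ≠ 0 := mul_ne_zero (pow_ne_zero _ (X_ne_zero _)) hf0
  have hmem (i : Fin (N + 2)) : X i * g ∈ homogeneousPart I (d + s + 1) := by
    refine ⟨?_, I.mul_mem_left _ (I.mul_mem_left _ hf.2)⟩
    have := (isHomogeneous_X k i).mul (((isHomogeneous_X k (0 : Fin (N + 2))).pow s).mul hf.1)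
    rwa [show 1 + (1 * s + d) = d + s + 1 by ring] at this
  have hX0 : (⟨_, hmem 0⟩ : homogeneousPart I (d + s + 1)) ≠ 0 :=
    Subtype.coe_ne_coe.1 (mul_ne_zero (X_ne_zero _) hg0)
  obtain ⟨c, hc⟩ := (finrank_eq_one_iff_of_nonzero' _ hX0).1 hr ⟨_, hmem 1⟩
  have hX : c • X 0 = (X 1 : MvPolynomial (Fin (N + 2)) k) :=
    mul_right_cancel₀ hg0 ((smul_mul_assoc c (X 0) g).trans (congrArg Subtype.val hc))
  have := congrArg (coeff (Finsupp.single 1 1)) hX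
  simp [coeff_X, Finsupp.single_left_inj] at this

theorem isOneLessAt_hilbFn_bot_iff (hN : 2 ≤ N) :
    IsOneLessAt (hilbFn k I) (hilbFn k (⊥ : Ideal (MvPolynomial (Fin N) k))) r ↔
      Module.finrank k (homogeneousPart I r) = 1 := by
  have key (d : ℕ) : hilbFn k I d + Module.finrank k (homogeneousPart I d) =
      hilbFn k (⊥ : Ideal (MvPolynomial (Fin N) k)) d := by
    rw [hilbFn_add_finrank_homogeneousPart, ← hilbFn_add_finrank_homogeneousPart ⊥ d,
      homogeneousPart_bot, finrank_bot, add_zero]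
  refine ⟨fun h => by have := h.2; have := key r; omega, fun h => ⟨fun d hd => ?_, h ▸ key r⟩⟩
  rw [← key d, homogeneousPart_eq_bot_of_lt hN h hd, finrank_bot, add_zero]

theorem hilbFn_lt_iff {J : Ideal (MvPolynomial (Fin N) k)} (hIJ : I ≤ J) {d : ℕ} :
    hilbFn k J d < hilbFn k I d ↔ homogeneousPart I d < homogeneousPart J d := by
  have hle : homogeneousPart I d ≤ homogeneousPart J d := inf_le_inf_left _ hIJ
  have hI := hilbFn_add_finrank_homogeneousPart I d
  have hJ := hilbFn_add_finrank_homogeneousPart J d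
  refine ⟨fun h => hle.lt_of_ne fun heq => ?_, fun h => ?_⟩
  · rw [heq] at hI
    omega
  · have := Submodule.finrank_lt_finrank_of_lt h
    omega

theorem hilbFn_lt_hilbFn_succ {J : Ideal (MvPolynomial (Fin N) k)} (hIJ : I ≤ J)
    {z : MvPolynomial (Fin N) k} (hz : z.IsHomogeneous 1)
    (hreg : IsSMulRegular (MvPolynomial (Fin N) k ⧸ I) z) {d : ℕ}
    (hd : hilbFn k J d < hilbFn k I d) : hilbFn k J (d + 1) < hilbFn k I (d + 1) := by
  obtain ⟨f, hfJ, hfI⟩ := SetLike.exists_of_lt ((hilbFn_lt_iff hIJ).1 hd)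
  have hzf : z * f ∈ homogeneousPart J (d + 1) :=
    ⟨add_comm 1 d ▸ hz.mul hfJ.1, J.mul_mem_left _ hfJ.2⟩
  refine (hilbFn_lt_iff hIJ).2 (SetLike.lt_iff_le_and_exists.2
    ⟨inf_le_inf_left _ hIJ, _, hzf, fun h => hfI ⟨hfJ.1, ?_⟩⟩)
  exact mem_of_isSMulRegular_quotient_of_smul_mem hreg h.2

theorem isSMulRegular_quotient_span_X {σ R : Type*} [CommRing R] {t : Set σ} {i : σ} (hi : i ∉ t) :
    IsSMulRegular (MvPolynomial σ R ⧸ (Ideal.span (X '' t) : Ideal (MvPolynomial σ R)))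
      (X i : MvPolynomial σ R) := by
  have h := isPermRegular_X σ R Set.univ t t.subset_univ i ⟨trivial, hi⟩
  rwa [bot_sup_eq, smul_eq_mul, Ideal.mul_top] at h

theorem muS_add_one_eq_choose_iff (hI : IdealHomog k I) (he : 0 < e) (heN : e ≤ N)
    (hr : idealOfVars (Fin N) k ^ (r + 1) ≤ I ⊔ tailIdeal k N e) :
    muS k e I + 1 = (e + r).choose r ↔
      IsOneLessAt (hilbFn k (I ⊔ tailIdeal k N e)) (hilbFn k (tailIdeal k N e)) r := by
  rw [muS_eq_sum_hilbFn hI hr, ← sum_hilbFn_tailIdeal (k := k) he heN r]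
  have hX0 : IsSMulRegular (MvPolynomial (Fin N) k ⧸ tailIdeal k N e)
      (X ⟨0, he.trans_le heN⟩ : MvPolynomial (Fin N) k) :=
    isSMulRegular_quotient_span_X he.not_ge
  exact (isOneLessAt_iff_partialSum (hilbFn_anti le_sup_right)
    fun _ => hilbFn_lt_hilbFn_succ le_sup_right (isHomogeneous_X _ _) hX0).symm

theorem muS_add_one_eq_choose_iff_finrank (hI : IdealHomog k I) (he : 0 < e) (heN : e < N)
    (hr : idealOfVars (Fin N) k ^ (r + 1) ≤ I ⊔ tailIdeal k N e)
    (hH : hilbFn k I = partialSum^[N - e] (hilbFn k (I ⊔ tailIdeal k N e))) :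
    muS k e I + 1 = (e + r).choose r ↔ Module.finrank k (homogeneousPart I r) = 1 := by
  rw [muS_add_one_eq_choose_iff hI he heN.le hr, ← isOneLessAt_iterate_partialSum_iff (N - e), ← hH,
    ← hilbFn_bot, isOneLessAt_hilbFn_bot_iff (by omega)]

end HilbertFunction

section Degree

theorem exists_natDegree_eq_and_eval_eq_iterate_partialSum {F : ℕ → ℕ} {n m : ℕ}
    (hF : ∀ j ≥ m, F j = 0) (hsum : ∑ j ∈ Finset.range m, F j ≠ 0) :
    ∃ P : Polynomial ℚ, P.natDegree = n ∧
      ((∑ j ∈ Finset.range m, F j : ℕ) : ℚ) = P.leadingCoeff * n.factorial ∧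
      ∀ d ≥ m, ((partialSum^[n + 1] F d : ℕ) : ℚ) = P.eval (d : ℚ) := by
  set P : Polynomial ℚ := ∑ j ∈ Finset.range m,
    Polynomial.C (F j : ℚ) * Polynomial.preHilbertPoly ℚ n j with hP
  have hle : P.natDegree ≤ n := Polynomial.natDegree_sum_le_of_forall_le _ _ fun j _ =>
    (Polynomial.natDegree_C_mul_le _ _).trans (Polynomial.natDegree_preHilbertPoly ℚ n j).le
  have hcoeff : P.coeff n * n.factorial = (∑ j ∈ Finset.range m, F j : ℕ) := by
    simp only [hP, Polynomial.finsetSum_coeff, Polynomial.coeff_C_mul,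
      Polynomial.coeff_preHilbertPoly_self, ← Finset.sum_mul, mul_assoc,
      inv_mul_cancel₀ (Nat.cast_ne_zero.2 n.factorial_ne_zero : (n.factorial : ℚ) ≠ 0), mul_one,
      Nat.cast_sum]
  have hne : P.coeff n ≠ 0 := fun h0 => hsum <| by
    rw [h0, zero_mul] at hcoeff
    exact_mod_cast hcoeff.symm
  have hdeg : P.natDegree = n := hle.antisymm (Polynomial.le_natDegree_of_ne_zero hne)
  refine ⟨P, hdeg, by rw [Polynomial.leadingCoeff, hdeg, hcoeff], fun d hd => ?_⟩
  have htrunc : partialSum^[n + 1] F d =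
      ∑ j ∈ Finset.range m, F j * (n + (d - j)).choose n := by
    rw [iterate_partialSum_succ]
    refine (Finset.sum_subset (Finset.range_mono (by omega)) fun j _ hj => ?_).symm
    rw [hF j (by simpa using hj), zero_mul]
  rw [htrunc, hP, Polynomial.eval_finsetSum, Nat.cast_sum]
  refine Finset.sum_congr rfl fun j hj => ?_
  have hjd : j ≤ d := (Finset.mem_range.1 hj).le.trans hd
  rw [Polynomial.eval_mul, Polynomial.eval_C,
    Polynomial.preHilbertPoly_eq_choose_sub_add ℚ n hjd, add_comm n, Nat.cast_mul]

theorem hasDeg_of_hilbFn_eq_iterate_partialSum {k : Type} [Field k] {N n m : ℕ}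
    {I : Ideal (MvPolynomial (Fin N) k)} {F : ℕ → ℕ} (hI : hilbFn k I = partialSum^[n + 1] F)
    (hF : ∀ j ≥ m, F j = 0) (hsum : ∑ j ∈ Finset.range m, F j ≠ 0) :
    HasDeg k I n (∑ j ∈ Finset.range m, F j) := by
  obtain ⟨P, hdeg, hlead, heval⟩ :=
    exists_natDegree_eq_and_eval_eq_iterate_partialSum (n := n) hF hsum
  refine ⟨P, hdeg, hlead, ?_⟩
  filter_upwards [Filter.eventually_ge_atTop m] with d hd
  rw [hI, heval d hd]

end Degree

section Depth

open RingTheory.Sequence CategoryTheory Abelian Limits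

universe u

variable {k : Type*} {A : Type u} [Field k] [CommRing A] [Algebra k A]

/- Prime avoidance over an infinite field: a linear subspace is not a finite union of proper
subspaces. -/
theorem exists_mem_isSMulRegular_of_mem_radical [Infinite k] [IsNoetherianRing A] {M : Type*}
    [AddCommGroup M] [Module A M] [Module.Finite A M] {V : Submodule k A} {f : A}
    (hf : f ∈ (Module.annihilator A M ⊔ Ideal.span (V : Set A)).radical)
    (hreg : IsSMulRegular M f) : ∃ z ∈ V, IsSMulRegular M z := by
  set s := (associatedPrimes.finite A M).toFinset
  have hs : ∀ p ∈ s, ¬ V ≤ p.restrictScalars k := by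
    intro p hp hVp
    have hp : IsAssociatedPrime p M := (associatedPrimes.finite A M).mem_toFinset.mp hp
    have hfp : f ∈ p := by
      have hle : Module.annihilator A M ⊔ Ideal.span (V : Set A) ≤ p :=
        sup_le (Submodule.annihilator_top (R := A) (M := M) ▸ hp.annihilator_le)
          (Ideal.span_le.mpr hVp)
      exact hp.isPrime.radical_le_iff.mpr hle hf
    have : f ∈ {r : A | IsSMulRegular M r}ᶜ :=
      biUnion_associatedPrimes_eq_compl_regular A M ▸ Set.mem_biUnion hp hfp
    exact this hreg
  have hne := Subspace.biUnion_ne_univ_of_top_notMem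
    (s := s.image fun p ↦ (p.restrictScalars k).comap V.subtype) (by
      intro htop
      obtain ⟨p, hp, hpV⟩ := Finset.mem_image.mp htop
      exact hs p hp (Submodule.comap_subtype_eq_top.mp hpV))
  obtain ⟨z, hz⟩ := (Set.ne_univ_iff_exists_notMem _).mp hne
  refine ⟨z, z.2, by_contra fun hzreg ↦ hz ?_⟩
  have : (z : A) ∈ ⋃ p ∈ associatedPrimes A M, (p : Set A) :=
    biUnion_associatedPrimes_eq_compl_regular A M ▸ hzreg
  obtain ⟨p, hp, hzp⟩ := Set.mem_iUnion₂.mp this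
  exact Set.mem_biUnion (Finset.mem_coe.mpr (Finset.mem_image_of_mem _
    ((associatedPrimes.finite A M).mem_toFinset.mpr hp))) hzp

theorem subsingleton_ext_quotSMulTop {M N : ModuleCat.{u} A} {z : A} (hz : IsSMulRegular M z)
    {c : ℕ} (hext : ∀ i < c + 1, Subsingleton (Ext N M i)) :
    ∀ i < c, Subsingleton (Ext N (ModuleCat.of A (QuotSMulTop z M)) i) := by
  intro i hi
  have zero1 := AddCommGrpCat.isZero_of_iff_subsingleton.mpr (hext i (by lia))
  have zero2 := AddCommGrpCat.isZero_of_iff_subsingleton.mpr (hext (i + 1) (by lia))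
  exact AddCommGrpCat.subsingleton_of_isZero <| ShortComplex.Exact.isZero_of_both_zeros
    ((Ext.covariant_sequence_exact₃' N hz.smulShortComplex_shortExact) i (i + 1) rfl)
    (zero1.eq_zero_of_src _) (zero2.eq_zero_of_tgt _)

theorem exists_isWeaklyRegular_of_subsingleton_ext [Infinite k] [IsNoetherianRing A]
    {V : Submodule k A} {N : ModuleCat.{u} A} [Module.Finite A N] {c : ℕ} (M : ModuleCat.{u} A)
    [Module.Finite A M] (hext : ∀ i < c, Subsingleton (Ext N M i))
    (hV : Module.annihilator A N ≤ (Module.annihilator A M ⊔ Ideal.span (V : Set A)).radical) :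
    ∃ l : List A, l.length = c ∧ (∀ z ∈ l, z ∈ V) ∧ IsWeaklyRegular M l := by
  induction c generalizing M with
  | zero => exact ⟨[], by simp⟩
  | succ c ih =>
    have : Subsingleton (N ⟶ M) := Ext.addEquiv₀.subsingleton_congr.mp (hext 0 c.zero_lt_succ)
    have : Subsingleton (N →ₗ[A] M) := ModuleCat.homAddEquiv.symm.subsingleton
    obtain ⟨x, hxN, hx⟩ := IsSMulRegular.subsingleton_linearMap_iff.mp this
    obtain ⟨z, hzV, hz⟩ := exists_mem_isSMulRegular_of_mem_radical (hV hxN) hx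
    have hann : Module.annihilator A M ≤ Module.annihilator A (QuotSMulTop z M) :=
      LinearMap.annihilator_le_of_surjective _ (Submodule.mkQ_surjective _)
    obtain ⟨l, hl, hlV, hreg⟩ := ih (ModuleCat.of A (QuotSMulTop z M))
      (subsingleton_ext_quotSMulTop hz hext)
      (hV.trans (Ideal.radical_mono (sup_le_sup_right hann _)))
    exact ⟨z :: l, by simp [hl], List.forall_mem_cons.mpr ⟨hzV, hlV⟩, .cons hz hreg⟩

/- Depth does not depend on the regular sequence (Rees), so over an infinite field a maximal
regular sequence can be chosen in any subspace generating `m` up to radical modulo `J`. -/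
theorem exists_isWeaklyRegular_quotient_of_isRegular [Infinite k] [IsNoetherianRing A]
    {V : Submodule k A} {J m : Ideal A} (hJ : J ≤ m) (hm : m ≠ ⊤)
    (hV : m ≤ (J ⊔ Ideal.span (V : Set A)).radical) {l : List A} (hl : ∀ z ∈ l, z ∈ m)
    (hreg : IsRegular (A ⧸ J) l) :
    ∃ l' : List A, l'.length = l.length ∧ (∀ z ∈ l', z ∈ V) ∧ IsWeaklyRegular (A ⧸ J) l' := by
  refine exists_isWeaklyRegular_of_subsingleton_ext (N := ModuleCat.of A (A ⧸ m))
    (ModuleCat.of A (A ⧸ J)) ?_ ?_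
  · refine ModuleCat.subsingleton_ext_of_exists_isRegular m (ModuleCat.of A (A ⧸ m)) ?_ _ ?_ l hl
      hreg
    · rw [Module.support_eq_zeroLocus, Ideal.annihilator_quotient]
    · rwa [lt_top_iff_ne_top, Ne, smul_top_quotient_eq_top_iff, sup_eq_right.mpr hJ]
  · simpa only [Ideal.annihilator_quotient] using hV

end Depth

section LinearSpace

open RingTheory.Sequence

variable {k : Type*} {A : Type*} [Field k] [CommRing A] [Algebra k A]

theorem finrank_inf_add_length_le {V : Submodule k A} [FiniteDimensional k V] {J : Ideal A}
    {l : List A} (hl : ∀ z ∈ l, z ∈ V) (hreg : IsWeaklyRegular (A ⧸ J) l)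
    (hne : J ⊔ Ideal.ofList l ≠ ⊤) :
    Module.finrank k ↥(V ⊓ J.restrictScalars k) + l.length ≤
      Module.finrank k ↥(V ⊓ (J ⊔ Ideal.ofList l).restrictScalars k) := by
  induction l generalizing J with
  | nil =>
    rw [List.length_nil, add_zero]
    exact Submodule.finrank_mono (inf_le_inf_left V fun _ ↦ Ideal.mem_sup_left)
  | cons a l ih =>
    obtain ⟨ha, hreg⟩ := isWeaklyRegular_quotient_cons_iff.mp hreg
    obtain ⟨haV, hl⟩ := List.forall_mem_cons.mp hl
    rw [smul_top_eq_span_singleton] at hreg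
    rw [Ideal.ofList_cons, ← sup_assoc] at hne ⊢
    have haJ : a ∉ J := fun haJ ↦ by
      have h1 : Ideal.Quotient.mk J 1 = 0 := ha <| by
        change Ideal.Quotient.mk J (a * 1) = a • 0
        rw [smul_zero, mul_one, Ideal.Quotient.eq_zero_iff_mem.mpr haJ]
      have hJ : J = ⊤ := J.eq_top_iff_one.mpr (Ideal.Quotient.eq_zero_iff_mem.mp h1)
      exact hne (by rw [hJ, top_sup_eq, top_sup_eq])
    have hlt : V ⊓ J.restrictScalars k < V ⊓ (J ⊔ Ideal.span {a}).restrictScalars k :=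
      lt_of_le_of_ne (inf_le_inf_left V fun _ ↦ Ideal.mem_sup_left) fun h ↦
        haJ (h.ge ⟨haV, Ideal.mem_sup_right (Ideal.mem_span_singleton_self a)⟩).2
    have := Submodule.finrank_lt_finrank_of_lt hlt
    have := ih hl hreg hne
    rw [List.length_cons]
    lia

theorem le_sup_ofList_of_finrank_le {V : Submodule k A} [FiniteDimensional k V] {J : Ideal A}
    {l : List A} (hl : ∀ z ∈ l, z ∈ V) (hreg : IsWeaklyRegular (A ⧸ J) l)
    (hne : J ⊔ Ideal.ofList l ≠ ⊤) (hV : Module.finrank k V ≤ l.length) :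
    V ≤ (J ⊔ Ideal.ofList l).restrictScalars k :=
  inf_eq_left.mp <| Submodule.eq_of_le_of_finrank_le inf_le_left <|
    (hV.trans (Nat.le_add_left _ _)).trans (finrank_inf_add_length_le hl hreg hne)

end LinearSpace

section CohenMacaulay

open RingTheory.Sequence

variable {k : Type} [Field k] {N e m : ℕ} {I : Ideal (MvPolynomial (Fin N) k)}

theorem finrank_span_X_le (s : Set (Fin N)) :
    Module.finrank k (Submodule.span k ((X : Fin N → MvPolynomial (Fin N) k) '' s)) ≤ s.ncard := by
  classical
  rw [Set.ncard_eq_toFinset_card']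
  refine (finrank_span_le_card _).trans ?_
  rw [Set.toFinset_image]
  exact Finset.card_image_le

theorem IsCMQuot.hilbFn_eq [Infinite k] (hI : IdealHomog k I) (hne : I ≠ ⊤)
    (hm : idealOfVars (Fin N) k ^ m ≤ I ⊔ tailIdeal k N e) (hCM : IsCMQuot k I (N - e)) :
    hilbFn k I = partialSum^[N - e] (hilbFn k (I ⊔ tailIdeal k N e)) := by
  obtain ⟨l₀, hl₀, hl₀m, hreg₀⟩ := isCMQuot_iff.mp hCM
  set V := Submodule.span k ((X : Fin N → MvPolynomial (Fin N) k) '' {i | e ≤ i})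
  have : FiniteDimensional k V := FiniteDimensional.span_of_finite k (Set.toFinite _)
  have hspan : Ideal.span (V : Set (MvPolynomial (Fin N) k)) = tailIdeal k N e :=
    Submodule.span_span_of_tower k (MvPolynomial (Fin N) k) _
  obtain ⟨l, hl, hlV, hreg⟩ := exists_isWeaklyRegular_quotient_of_isRegular (V := V)
    (hI.le_idealOfVars hne) idealOfVars_ne_top (hspan ▸ fun f hf ↦ ⟨m, hm (Ideal.pow_mem_pow hf m)⟩)
    hl₀m hreg₀
  have hle : Ideal.ofList l ≤ tailIdeal k N e := Ideal.span_le.mpr fun z hz ↦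
    hspan ▸ Ideal.subset_span (hlV z hz)
  have hVl := le_sup_ofList_of_finrank_le hlV hreg
    (ne_top_of_le_ne_top (sup_tailIdeal_ne_top hI hne e) (sup_le_sup_left hle I))
    (by rw [hl, hl₀, ← ncard_setOf_le_val]; exact finrank_span_X_le _)
  have heq : I ⊔ Ideal.ofList l = I ⊔ tailIdeal k N e :=
    (sup_le_sup_left hle I).antisymm (sup_le le_sup_left (hspan ▸ Ideal.span_le.mpr hVl))
  have hlin : ∀ z ∈ l, z.IsHomogeneous 1 := fun z hz ↦ by
    have hV : V ≤ homogeneousSubmodule (Fin N) k 1 := Submodule.span_le.mpr <| by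
      rintro _ ⟨i, -, rfl⟩
      exact isHomogeneous_X k i
    exact hV (hlV z hz)
  rw [← heq, ← hl₀, ← hl]
  exact hilbFn_eq_iterate_partialSum hI hlin hreg

/-- The indices of the variables of the Noether normalization `S = k[x_e, …, x_{N-1}]`, as a list;
it indexes the regular sequences and the hyperplane sections of the argument. -/
def tailList (N e : ℕ) : List (Fin N) := (List.finRange N).filter (e ≤ ·)

theorem setOf_mem_tailList : {i | i ∈ tailList N e} = {i : Fin N | e ≤ i} := by
  simp [tailList]

theorem nodup_tailList : (tailList N e).Nodup := (List.nodup_finRange N).filter _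

theorem length_tailList : (tailList N e).length = N - e := by
  rw [← ncard_setOf_le_val, ← setOf_mem_tailList, ← List.toFinset_card_of_nodup nodup_tailList,
    ← Set.ncard_coe_finset, List.coe_toFinset]

theorem ofList_map_X_tailList : Ideal.ofList ((tailList N e).map X) = tailIdeal k N e := by
  rw [tailIdeal, ← setOf_mem_tailList, Ideal.ofList]
  congr 1
  ext
  simp

end CohenMacaulay

section Main

variable {k : Type} [Field k] {N n e r : ℕ} {I : Ideal (MvPolynomial (Fin N) k)}

theorem HasDeg.isPermRegular_tailVars (hI : IdealHomog k I) (hNN : IsNoetherNormalization k e I)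
    (hN : N - e = n + 1) (hdeg : HasDeg k I n (muS k e I)) :
    IsPermRegular X {i : Fin N | e ≤ i} I := by
  have hs : ({i | e ≤ i.val} : Finset (Fin N)).card = n + 1 := by
    rw [← Set.ncard_coe_finset, Finset.coe_filter_univ, ncard_setOf_le_val, hN]
  rw [← Finset.coe_filter_univ]
  have := hNN.finite_quotient
  rw [tailIdeal, ← Finset.coe_filter_univ] at this
  rw [muS_eq_finrank, tailIdeal, ← Finset.coe_filter_univ] at hdeg
  exact hdeg.isPermRegular hI hs

theorem IsPermRegular.isCMQuot (hI : IdealHomog k I) (hne : I ≠ ⊤)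
    (h : IsPermRegular X {i : Fin N | e ≤ i} I) : IsCMQuot k I (N - e) := by
  rw [← setOf_mem_tailList] at h
  refine isCMQuot_iff.mpr ⟨(tailList N e).map X, ?_, ?_, isRegular_quotient_iff.mpr ⟨?_, ?_⟩⟩
  · rw [List.length_map, length_tailList]
  · exact List.forall_mem_map.mpr fun i _ ↦ Ideal.subset_span (Set.mem_range_self i)
  · exact h.isWeaklyRegular nodup_tailList
  · rw [ofList_map_X_tailList]
    exact sup_tailIdeal_ne_top hI hne e

theorem IsPermRegular.eq_of_β_truncIdeal_ne_zero (hI : IdealHomog k I)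
    (h : IsPermRegular X {i : Fin N | e ≤ i} I)
    (hr : idealOfVars (Fin N) k ^ (r + 1) ≤ I ⊔ tailIdeal k N e)
    (res : MinGradedFreeRes k (Fin N) ↥(truncIdeal k I r) (idealDeg k (truncIdeal k I r)))
    {i : ℕ} {j : ℤ} (hij : res.β i j ≠ 0) : j = r + 1 := by
  set l' := (List.finRange N).filter fun i ↦ ¬ e ≤ i.val
  have hnodup : (tailList N e ++ l').Nodup := by
    refine nodup_tailList.append ((List.nodup_finRange N).filter _) fun i hi hi' ↦ ?_
    simp only [tailList, l', List.mem_filter, decide_eq_true_eq] at hi hi'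
    exact hi'.2 hi.2
  have hall : ∀ i, i ∈ tailList N e ++ l' := fun i ↦ by
    simp [tailList, l', le_or_gt]
  rw [tailIdeal, ← setOf_mem_tailList] at hr
  rw [← setOf_mem_tailList] at h
  exact res.eq_of_β_truncIdeal_ne_zero hI hnodup hall
    (isRegularAbove_ideal hI.isGradedSubmodule h hr hnodup hall) hij

theorem hasDeg_muS (hI : IdealHomog k I) (hne : I ≠ ⊤) (hN : N - e = n + 1)
    (hr : idealOfVars (Fin N) k ^ (r + 1) ≤ I ⊔ tailIdeal k N e)
    (hH : hilbFn k I = partialSum^[N - e] (hilbFn k (I ⊔ tailIdeal k N e))) :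
    HasDeg k I n (muS k e I) := by
  have hsum : ∑ d ∈ Finset.range (r + 1), hilbFn k (I ⊔ tailIdeal k N e) d ≠ 0 := fun h0 ↦ by
    have := Finset.sum_eq_zero_iff.mp h0 0 (Finset.mem_range.mpr r.succ_pos)
    exact one_ne_zero ((hilbFn_zero (sup_tailIdeal_ne_top hI hne e)).symm.trans this)
  rw [muS_eq_sum_hilbFn hI hr]
  exact hasDeg_of_hilbFn_eq_iterate_partialSum (hN ▸ hH) (fun _ ↦ hilbFn_eq_zero hr) hsum

theorem IsNoetherNormalization.ne_top (hNN : IsNoetherNormalization k e I) : I ≠ ⊤ := by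
  have := hNN.1.nontrivial
  exact Ideal.Quotient.nontrivial_iff.mp this

theorem muS_eq_choose_sub_one_iff (hI : IdealHomog k I) (he : 0 < e) (heN : e < N)
    (hr : idealOfVars (Fin N) k ^ (r + 1) ≤ I ⊔ tailIdeal k N e)
    (hH : hilbFn k I = partialSum^[N - e] (hilbFn k (I ⊔ tailIdeal k N e))) :
    muS k e I = (e + r).choose r - 1 ↔ Module.finrank k (idealDeg k I r) = 1 := by
  rw [finrank_idealDeg, ← muS_add_one_eq_choose_iff_finrank hI he heN hr hH]
  have := Nat.choose_pos (Nat.le_add_left r e)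
  lia

end Main

end Paper

end

theorem stmt18_general (k : Type) [Field k] [Infinite k] (n e r : ℕ) (he : 0 < e)
    (I : Ideal (MvPolynomial (Fin (n + e + 1)) k))
    (hIhom : Paper.IdealHomog k I)
    (hNN : Paper.IsNoetherNormalization k e I)
    (hr : Paper.reductionNumber k e I = r) :
    (Paper.HasDeg k I n ((e + r).choose r - 1) ∧
        Paper.muS k e I = (e + r).choose r - 1) ↔
      (Paper.IsCMQuot k I (n + 1) ∧
        Module.finrank k ↥(Paper.idealDeg k I (r : ℤ)) = 1 ∧
        ∃ d0 : ℤ, ∀ res : Paper.MinGradedFreeRes k (Fin (n + e + 1))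
            ↥(Paper.truncIdeal k I r) (Paper.idealDeg k (Paper.truncIdeal k I r)),
          ∀ (i : ℕ) (j : ℤ), res.β i j ≠ 0 → j = d0) := by
  have hN : n + e + 1 - e = n + 1 := by lia
  have heN : e < n + e + 1 := by lia
  have hle := (Paper.reductionNumber_spec hIhom hNN hr).2
  constructor
  · rintro ⟨hdeg, hmu⟩
    have hreg := Paper.HasDeg.isPermRegular_tailVars hIhom hNN hN (hmu ▸ hdeg)
    have hH := Paper.ncard_setOf_le_val (N := n + e + 1) e ▸ hreg.hilbFn_eq hIhom
    exact ⟨hN ▸ hreg.isCMQuot hIhom hNN.ne_top,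
      (Paper.muS_eq_choose_sub_one_iff hIhom he heN hle hH).mp hmu,
      r + 1, fun res _ _ ↦ hreg.eq_of_β_truncIdeal_ne_zero hIhom hle res⟩
  · rintro ⟨hCM, hIr, -⟩
    have hH := Paper.IsCMQuot.hilbFn_eq hIhom hNN.ne_top hle (hN.symm ▸ hCM)
    have hmu := (Paper.muS_eq_choose_sub_one_iff hIhom he heN hle hH).mpr hIr
    exact ⟨hmu ▸ Paper.hasDeg_muS hIhom hNN.ne_top hN hle hH, hmu⟩

/-- Theorem 4.1: for a non-degenerate closed subscheme `X ⊆ ℙ^{n+e}` with reduction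
number `r = r_S(R)` w.r.t. the Noether normalization `S = k[x_e,…,x_{n+e}] → R`:
`deg(X) = μ_S(R) = C(e+r, r) - 1` iff `X` is arithmetically Cohen-Macaulay,
`dim_k (I_X)_r = 1`, and the truncated ideal `(I_X)_{≥ r+1}` has a linear minimal free
resolution. -/
theorem stmt18 (k : Type) [Field k] [IsAlgClosed k] (n e r : ℕ) (he : 0 < e)
    (I : Ideal (MvPolynomial (Fin (n + e + 1)) k))
    (hIhom : Paper.IdealHomog k I) (hsat : Paper.IsSaturatedIdeal k I)
    (hnd : Paper.Nondegenerate k I) (hproper : I ≠ ⊤)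
    (hNN : Paper.IsNoetherNormalization k e I)
    (hr : Paper.reductionNumber k e I = r) :
    (Paper.HasDeg k I n ((e + r).choose r - 1) ∧
        Paper.muS k e I = (e + r).choose r - 1) ↔
      (Paper.IsCMQuot k I (n + 1) ∧
        Module.finrank k ↥(Paper.idealDeg k I (r : ℤ)) = 1 ∧
        ∃ d0 : ℤ, ∀ res : Paper.MinGradedFreeRes k (Fin (n + e + 1))
            ↥(Paper.truncIdeal k I r) (Paper.idealDeg k (Paper.truncIdeal k I r)),
          ∀ (i : ℕ) (j : ℤ), res.β i j ≠ 0 → j = d0) := by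
  have : Infinite k := IsAlgClosed.instInfinite
  exact stmt18_general k n e r he I hIhom hNN hr
end
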